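/- arXiv:2008.10044 — 2 statements merged into one kernel-verified Lean document; each statement's English description precedes it below -/
import Mathlib

section
/- Let A be a Nakayama algebra, S and T simple modules, and z ∈ ℕ. (a) If z is even, Ω^z(IT) = PS and pd T ≥ z, then Σ^z(PS) = IT and id S ≥ z. (b) If z is odd, Ω^z(T) = PS and pd(IT) ≥ z, then Σ^z(S) = IT and id(PS) ≥ z. -/
open CategoryTheory CategoryTheory.Limits

noncomputable section

namespace ArtinAlg

variable (A : Type) [Ring A]

/-- `M` admits a projective resolution of length at most `n`. -/
inductive ProjDimLE : ℕ → ModuleCat.{0} A → Prop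
  | zero (M : ModuleCat.{0} A) (h : Projective M) : ProjDimLE 0 M
  | succ (n : ℕ) (M P : ModuleCat.{0} A) (f : P ⟶ M) (hP : Projective P) (hf : Epi f)
      (h : ProjDimLE n (kernel f)) : ProjDimLE (n + 1) M

/-- `M` admits an injective coresolution of length at most `n`. -/
inductive InjDimLE : ℕ → ModuleCat.{0} A → Prop
  | zero (M : ModuleCat.{0} A) (h : Injective M) : InjDimLE 0 M
  | succ (n : ℕ) (M I : ModuleCat.{0} A) (f : M ⟶ I) (hI : Injective I) (hf : Mono f)
      (h : InjDimLE n (cokernel f)) : InjDimLE (n + 1) M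

/-- The projective dimension `pd M ∈ ℕ∞`. -/
def projDim (M : ModuleCat.{0} A) : ℕ∞ :=
  sInf {d : ℕ∞ | ∃ n : ℕ, d = n ∧ ProjDimLE A n M}

/-- The injective dimension `id M ∈ ℕ∞`. -/
def injDim (M : ModuleCat.{0} A) : ℕ∞ :=
  sInf {d : ℕ∞ | ∃ n : ℕ, d = n ∧ InjDimLE A n M}

/-- `f : P ⟶ M` is a projective cover: `P` is projective and `f` is an essential
(superfluous) epimorphism. -/
def IsProjectiveCoverHom {P M : ModuleCat.{0} A} (f : P ⟶ M) : Prop :=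
  Projective P ∧ Epi f ∧ ∀ (N : ModuleCat.{0} A) (g : N ⟶ P), Epi (g ≫ f) → Epi g

/-- `P` is a projective cover of `M`. -/
def IsProjCoverOf (M P : ModuleCat.{0} A) : Prop :=
  ∃ f : P ⟶ M, IsProjectiveCoverHom A f

/-- `f : M ⟶ I` is an injective envelope: `I` is injective and `f` is an essential
monomorphism. -/
def IsInjectiveEnvelopeHom {M I : ModuleCat.{0} A} (f : M ⟶ I) : Prop :=
  Injective I ∧ Mono f ∧ ∀ (N : ModuleCat.{0} A) (g : I ⟶ N), Mono (f ≫ g) → Mono g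

/-- `I` is an injective envelope of `M`. -/
def IsInjEnvOf (M I : ModuleCat.{0} A) : Prop :=
  ∃ f : M ⟶ I, IsInjectiveEnvelopeHom A f

/-- `X ≅ Ω M`, the kernel of a projective cover of `M`. -/
def IsSyzygyOf (M X : ModuleCat.{0} A) : Prop :=
  ∃ (P : ModuleCat.{0} A) (f : P ⟶ M), IsProjectiveCoverHom A f ∧ Nonempty (X ≅ kernel f)

/-- `X ≅ Σ M`, the cokernel of an injective envelope of `M`. -/
def IsCosyzygyOf (M X : ModuleCat.{0} A) : Prop :=
  ∃ (I : ModuleCat.{0} A) (f : M ⟶ I), IsInjectiveEnvelopeHom A f ∧ Nonempty (X ≅ cokernel f)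

/-- `X ≅ Ω^n M`. -/
def IsNthSyzygy : ℕ → ModuleCat.{0} A → ModuleCat.{0} A → Prop
  | 0, M, X => Nonempty (X ≅ M)
  | n + 1, M, X => ∃ Y, IsSyzygyOf A M Y ∧ IsNthSyzygy n Y X

/-- `X ≅ Σ^n M`. -/
def IsNthCosyzygy : ℕ → ModuleCat.{0} A → ModuleCat.{0} A → Prop
  | 0, M, X => Nonempty (X ≅ M)
  | n + 1, M, X => ∃ Y, IsCosyzygyOf A M Y ∧ IsNthCosyzygy n Y X

/-- `X` is a direct summand of `Y`. -/
def IsDirectSummandOf (X Y : ModuleCat.{0} A) : Prop :=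
  ∃ (i : X ⟶ Y) (r : Y ⟶ X), i ≫ r = 𝟙 X

/-- `X ∈ add W` : `X` is a direct summand of a finite direct sum of copies of `W`. -/
def InAdd (X W : ModuleCat.{0} A) : Prop :=
  ∃ n : ℕ, IsDirectSummandOf A X (ModuleCat.of A (Fin n → ↥W))

/-- The delooping level of `M` is at most `d` :
`Ω^d M ∈ add (A ⊕ Ω^{d+1} M')` for some finitely generated `M'`. -/
def DelLE (d : ℕ) (M : ModuleCat.{0} A) : Prop :=
  ∃ X, IsNthSyzygy A d M X ∧
    ∃ M' : ModuleCat.{0} A, Module.Finite A ↥M' ∧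
      ∃ X', IsNthSyzygy A (d + 1) M' X' ∧ InAdd A X (ModuleCat.of A (A × ↥X'))

/-- The delooping level `del M ∈ ℕ∞`. -/
def delLevel (M : ModuleCat.{0} A) : ℕ∞ :=
  sInf {d : ℕ∞ | ∃ n : ℕ, d = n ∧ DelLE A n M}

/-- The delooping level of the algebra: the supremum of `del S` over the simple modules. -/
def delAlg : ℕ∞ :=
  sSup {d : ℕ∞ | ∃ S : ModuleCat.{0} A, IsSimpleModule A ↥S ∧ delLevel A S = d}

/-- `Q` is a minimal injective cogenerator: the injective envelope of the direct sum of
a complete set of representatives of the simple modules. -/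
def IsMinimalInjectiveCogenerator (Q : ModuleCat.{0} A) : Prop :=
  ∃ (ι : Type) (_ : Fintype ι) (S : ι → ModuleCat.{0} A),
    (∀ i, IsSimpleModule A ↥(S i)) ∧
    (∀ T : ModuleCat.{0} A, IsSimpleModule A ↥T → ∃! i, Nonempty (↥T ≃ₗ[A] ↥(S i))) ∧
    IsInjEnvOf A (ModuleCat.of A (∀ i, ↥(S i))) Q

/-- The desuspending level of `M` is at most `d` :
`Σ^d M ∈ add (D(A) ⊕ Σ^{d+1} M')` for some finitely generated `M'`. -/
def DesLE (d : ℕ) (M : ModuleCat.{0} A) : Prop :=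
  ∃ X, IsNthCosyzygy A d M X ∧
    ∃ Q, IsMinimalInjectiveCogenerator A Q ∧
      ∃ M' : ModuleCat.{0} A, Module.Finite A ↥M' ∧
        ∃ X', IsNthCosyzygy A (d + 1) M' X' ∧ InAdd A X (ModuleCat.of A (↥Q × ↥X'))

/-- The desuspending level `des M ∈ ℕ∞`. -/
def desLevel (M : ModuleCat.{0} A) : ℕ∞ :=
  sInf {d : ℕ∞ | ∃ n : ℕ, d = n ∧ DesLE A n M}

/-- The desuspending level of the algebra. -/
def desAlg : ℕ∞ :=
  sSup {d : ℕ∞ | ∃ S : ModuleCat.{0} A, IsSimpleModule A ↥S ∧ desLevel A S = d}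

/-- The (small) finitistic projective dimension `fin-pro A`. -/
def finProDim : ℕ∞ :=
  sSup {d : ℕ∞ | ∃ M : ModuleCat.{0} A, Module.Finite A ↥M ∧ projDim A M = d ∧ d ≠ ⊤}

/-- The (small) finitistic injective dimension `fin-inj A`. -/
def finInjDim : ℕ∞ :=
  sSup {d : ℕ∞ | ∃ M : ModuleCat.{0} A, Module.Finite A ↥M ∧ injDim A M = d ∧ d ≠ ⊤}

/-- The big finitistic projective dimension `Fin-pro A`. -/
def bigFinProDim : ℕ∞ :=
  sSup {d : ℕ∞ | ∃ M : ModuleCat.{0} A, projDim A M = d ∧ d ≠ ⊤}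

/-- The big finitistic injective dimension `Fin-inj A`. -/
def bigFinInjDim : ℕ∞ :=
  sSup {d : ℕ∞ | ∃ M : ModuleCat.{0} A, injDim A M = d ∧ d ≠ ⊤}

/-- `M` is an indecomposable nonzero module. -/
def Indec (M : ModuleCat.{0} A) : Prop :=
  Nontrivial ↥M ∧ ∀ (N₁ N₂ : Submodule A ↥M), IsCompl N₁ N₂ → N₁ = ⊥ ∨ N₂ = ⊥

/-- `M` is serial (uniserial): its submodules form a chain. -/
def IsUniserial (M : ModuleCat.{0} A) : Prop :=
  ∀ N₁ N₂ : Submodule A ↥M, N₁ ≤ N₂ ∨ N₂ ≤ N₁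

/-- `A` is a Nakayama algebra: all finitely generated indecomposable modules are serial. -/
def IsNakayama : Prop :=
  ∀ M : ModuleCat.{0} A, Module.Finite A ↥M → Indec A M → IsUniserial A M

/-- `A` is connected: it is not a nontrivial product of algebras. -/
def IsConnectedAlgebra : Prop :=
  Nontrivial A ∧ ∀ e : A, IsIdempotentElem e → e ∈ Set.center A → e = 0 ∨ e = 1

/-- `A` is a cyclic Nakayama algebra: connected Nakayama with no simple projective module. -/
def IsCyclicNakayama : Prop :=
  IsNakayama A ∧ IsConnectedAlgebra A ∧
    ¬ ∃ S : ModuleCat.{0} A, IsSimpleModule A ↥S ∧ Projective S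

/-- `T ≅ top M` (and `top M` is simple): there is an essential epimorphism `M ⟶ T`. -/
def IsSimpleTopOf (M T : ModuleCat.{0} A) : Prop :=
  IsSimpleModule A ↥T ∧
    ∃ f : M ⟶ T, Epi f ∧ ∀ (N : ModuleCat.{0} A) (g : N ⟶ M), Epi (g ≫ f) → Epi g

/-- `S ≅ soc M` (and `soc M` is simple): there is an essential monomorphism `S ⟶ M`. -/
def IsSimpleSocOf (M S : ModuleCat.{0} A) : Prop :=
  IsSimpleModule A ↥S ∧
    ∃ f : S ⟶ M, Mono f ∧ ∀ (N : ModuleCat.{0} A) (g : M ⟶ N), Mono (f ≫ g) → Mono g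

/-- `0 ⟶ N ⟶ E ⟶ M ⟶ 0` is an almost split (Auslander-Reiten) sequence. -/
def IsAlmostSplitSeq {N E M : ModuleCat.{0} A} (f : N ⟶ E) (g : E ⟶ M) : Prop :=
  Mono f ∧ Epi g ∧ (∃ w : f ≫ g = 0, (ShortComplex.mk f g w).Exact) ∧
  (¬ ∃ s : M ⟶ E, s ≫ g = 𝟙 M) ∧ Indec A N ∧ Indec A M ∧
  ∀ (X : ModuleCat.{0} A) (h : X ⟶ M), (¬ ∃ s : M ⟶ X, s ≫ h = 𝟙 M) → ∃ h' : X ⟶ E, h' ≫ g = h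

/-- `N ≅ τ M`, the Auslander-Reiten translate of `M` : there is an almost split sequence
`0 ⟶ N ⟶ E ⟶ M ⟶ 0`. -/
def IsTauOf (N M : ModuleCat.{0} A) : Prop :=
  ∃ (E : ModuleCat.{0} A) (f : N ⟶ E) (g : E ⟶ M), IsAlmostSplitSeq A f g

/-- `U ≅ ψ S = τ⁻ top (I S)`. -/
def IsPsiOf (S U : ModuleCat.{0} A) : Prop :=
  ∃ I, IsInjEnvOf A S I ∧ ∃ T, IsSimpleTopOf A I T ∧ IsTauOf A T U

/-- `T ≅ γ S = τ soc (P S)`. -/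
def IsGammaOf (S T : ModuleCat.{0} A) : Prop :=
  ∃ P, IsProjCoverOf A S P ∧ ∃ U, IsSimpleSocOf A P U ∧ IsTauOf A T U

/-- `T ≅ φ S = top (I S)`. -/
def IsPhiOf (S T : ModuleCat.{0} A) : Prop :=
  ∃ I, IsInjEnvOf A S I ∧ IsSimpleTopOf A I T

/-- There is a `ψ`-path `(S_1, …, S_m)` of cardinality `m` ending in `S`. -/
def PsiPathTo (m : ℕ) (S : ModuleCat.{0} A) : Prop :=
  1 ≤ m ∧ ∃ c : ℕ → ModuleCat.{0} A,
    (∀ i < m, IsSimpleModule A ↥(c i)) ∧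
    (∀ i, i + 1 < m → IsPsiOf A (c i) (c (i + 1))) ∧
    Nonempty (c (m - 1) ≅ S)

/-- `a(S)`: the supremum of the cardinalities of `ψ`-paths ending in `S`. -/
def aVal (S : ModuleCat.{0} A) : ℕ∞ :=
  sSup {d : ℕ∞ | ∃ m : ℕ, d = m ∧ PsiPathTo A m S}

/-- `a(A)`: the maximum of `a(S)` over the simple modules which are not `ψ`-cyclic. -/
def aAlg : ℕ∞ :=
  sSup {d : ℕ∞ | ∃ S : ModuleCat.{0} A, IsSimpleModule A ↥S ∧ aVal A S ≠ ⊤ ∧ aVal A S = d}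

/-- `S` is a composition factor of `M`: a simple subquotient of `M`. -/
def IsCompFactorOf (S M : ModuleCat.{0} A) : Prop :=
  IsSimpleModule A ↥S ∧ ∃ N' N : Submodule A ↥M, N' ≤ N ∧
    Nonempty ((↥N ⧸ N'.comap N.subtype) ≃ₗ[A] ↥S)

/-- `e(S) = min {pd S, pd (I S)} = x`. -/
def ERelVal (S : ModuleCat.{0} A) (x : ℕ∞) : Prop :=
  ∃ I, IsInjEnvOf A S I ∧ x = min (projDim A S) (projDim A I)

/-- `e*(S) = min {id S, id (P S)} = x`. -/
def EStarVal (S : ModuleCat.{0} A) (x : ℕ∞) : Prop :=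
  ∃ P, IsProjCoverOf A S P ∧ x = min (injDim A S) (injDim A P)

/-- `T = h(S) = top (Ω^{e(S)} N S)`, the homological permutation. -/
def HRel (S T : ModuleCat.{0} A) : Prop :=
  IsSimpleModule A ↥S ∧ IsSimpleModule A ↥T ∧
  ∃ z : ℕ, ERelVal A S z ∧
    ∃ N, ((Odd z ∧ N = S) ∨ (Even z ∧ IsInjEnvOf A S N)) ∧
      ∃ X, IsNthSyzygy A z N X ∧ IsSimpleTopOf A X T

/-- `S = h*(T) = soc (Σ^{e*(T)} N* T)`, the inverse homological permutation. -/
def HStarRel (T S : ModuleCat.{0} A) : Prop :=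
  IsSimpleModule A ↥T ∧ IsSimpleModule A ↥S ∧
  ∃ z : ℕ, EStarVal A T z ∧
    ∃ N, ((Odd z ∧ N = T) ∨ (Even z ∧ IsProjCoverOf A T N)) ∧
      ∃ X, IsNthCosyzygy A z N X ∧ IsSimpleSocOf A X S

/-- The `t`-fold relational iterate of a relation on modules (up to isomorphism). -/
def IterRel (r : ModuleCat.{0} A → ModuleCat.{0} A → Prop) :
    ℕ → ModuleCat.{0} A → ModuleCat.{0} A → Prop
  | 0, X, Y => Nonempty (X ≅ Y)
  | n + 1, X, Y => ∃ Z, r X Z ∧ IterRel r n Z Y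

end ArtinAlg

/-!
A nonzero composite `T ⟶ I ⟶ Z` out of the injective envelope of a simple module `T` splits off
`I`, so `I ≅ Σ^z W` as soon as `Extᶻ(j, W) ≠ 0` for the envelope `j : T ⟶ I`, where `W` is `P S` or
`S`: shift dimensions along the injective coresolution of `W`, whose cosyzygies are uniserial.
This nonvanishing is found by shifting along projective covers instead. Over a Nakayama algebra a
lift of a monomorphism of uniserial modules to first syzygies is an epimorphism and vice versa, so
`Ω^(z-1) j` is an epimorphism for even `z` and a monomorphism for odd `z`. In either case the
connecting map pulls back to a nonzero class: when `z` is even the extension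
`0 ⟶ Ω^z I ⟶ Q ⟶ Ω^(z-1) I ⟶ 0` does not split along `Ω^(z-1) j`, and when `z` is odd neither does
its pushout along the quotient map of `Ω^z I` onto the simple top `S` of `Ω^z T`.
-/

namespace ArtinAlg

open CategoryTheory.Abelian

universe w v u

section CoversAndEnvelopes

variable {A : Type} [Ring A]

lemma isProjectiveCoverHom_iff {P M : ModuleCat.{0} A} {f : P ⟶ M} :
    IsProjectiveCoverHom A f ↔
      Projective P ∧ Epi f ∧ ∀ N : Submodule A P, N.map f.hom = ⊤ → N = ⊤ := by
  refine and_congr_right fun _ => and_congr_right fun _ => ⟨fun h N hN => ?_, fun h N g hg => ?_⟩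
  · have hepi : Epi (ModuleCat.ofHom N.subtype ≫ f) := by
      rw [ModuleCat.epi_iff_range_eq_top, ModuleCat.hom_comp, LinearMap.range_comp,
        ModuleCat.hom_ofHom, Submodule.range_subtype, hN]
    simpa only [ModuleCat.epi_iff_range_eq_top, ModuleCat.hom_ofHom, Submodule.range_subtype]
      using h _ _ hepi
  · rw [ModuleCat.epi_iff_range_eq_top] at hg ⊢
    rw [ModuleCat.hom_comp, LinearMap.range_comp] at hg
    exact h _ hg

lemma isInjectiveEnvelopeHom_iff {M I : ModuleCat.{0} A} {f : M ⟶ I} :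
    IsInjectiveEnvelopeHom A f ↔
      Injective I ∧ Mono f ∧ ∀ N : Submodule A I, N.comap f.hom = ⊥ → N = ⊥ := by
  refine and_congr_right fun _ => and_congr_right fun _ => ⟨fun h N hN => ?_, fun h N g hg => ?_⟩
  · have hmono : Mono (f ≫ ModuleCat.ofHom N.mkQ) := by
      rw [ModuleCat.mono_iff_ker_eq_bot, ModuleCat.hom_comp, LinearMap.ker_comp,
        ModuleCat.hom_ofHom, Submodule.ker_mkQ, hN]
    simpa only [ModuleCat.mono_iff_ker_eq_bot, ModuleCat.hom_ofHom, Submodule.ker_mkQ]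
      using h _ _ hmono
  · rw [ModuleCat.mono_iff_ker_eq_bot] at hg ⊢
    rw [ModuleCat.hom_comp, LinearMap.ker_comp] at hg
    exact h _ hg

/-- If `N` is minimal among the submodules that `f` maps onto `M`, then a lift `P → N` of `f`
restricts to a surjective, hence bijective, endomorphism of `N`, so `N` is a summand of `P`. -/
lemma projective_of_minimal_map_eq_top {R P M : Type*} [Ring R] [AddCommGroup P] [Module R P]
    [AddCommGroup M] [Module R M] [Module.Projective R P] [IsNoetherian R P] {f : P →ₗ[R] M}
    {N : Submodule R P} (hN : Minimal (fun L : Submodule R P => L.map f = ⊤) N) :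
    Module.Projective R N := by
  have hfN : Function.Surjective (f ∘ₗ N.subtype) := by
    rw [← LinearMap.range_eq_top, LinearMap.range_comp, Submodule.range_subtype, hN.prop]
  obtain ⟨g, hg⟩ := Module.projective_lifting_property (f ∘ₗ N.subtype) f hfN
  have hgN : N.map (N.subtype ∘ₗ g) = N := by
    refine hN.eq_of_le ?_ ?_
    · rw [← Submodule.map_comp, ← LinearMap.comp_assoc, hg, hN.prop]
    · rw [Submodule.map_comp]
      exact Submodule.map_subtype_le N _
  have hsurj : Function.Surjective (g ∘ₗ N.subtype) := by
    rw [← LinearMap.range_eq_top, LinearMap.range_comp, Submodule.range_subtype]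
    apply Submodule.map_injective_of_injective N.subtype_injective
    rw [← Submodule.map_comp, hgN, Submodule.map_top, Submodule.range_subtype]
  let e : N ≃ₗ[R] N := LinearEquiv.ofBijective (g ∘ₗ N.subtype)
    ⟨IsNoetherian.injective_of_surjective_endomorphism _ hsurj, hsurj⟩
  exact Module.Projective.of_split N.subtype (e.symm.toLinearMap ∘ₗ g)
    (LinearMap.ext e.symm_apply_apply)

theorem exists_isProjectiveCoverHom [IsArtinianRing A] (M : ModuleCat.{0} A) [Module.Finite A M] :
    ∃ (P : ModuleCat.{0} A) (f : P ⟶ M), IsProjectiveCoverHom A f := by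
  obtain ⟨n, f, hf⟩ := Module.Finite.exists_fin' A M
  obtain ⟨N, hN⟩ := exists_minimal_of_wellFoundedLT
    (fun L : Submodule A (Fin n → A) => L.map f = ⊤)
    ⟨⊤, by rw [Submodule.map_top, LinearMap.range_eq_top.2 hf]⟩
  have hproj := projective_of_minimal_map_eq_top hN
  refine ⟨ModuleCat.of A N, ModuleCat.ofHom (f ∘ₗ N.subtype),
    isProjectiveCoverHom_iff.2 ⟨(IsProjective.iff_projective N).1 hproj, ?_, fun L hL => ?_⟩⟩
  · rw [ModuleCat.epi_iff_range_eq_top, ModuleCat.hom_ofHom, LinearMap.range_comp,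
      Submodule.range_subtype, hN.prop]
  · rw [ModuleCat.hom_ofHom, Submodule.map_comp] at hL
    apply Submodule.map_injective_of_injective N.subtype_injective
    rw [hN.eq_of_le hL (Submodule.map_subtype_le N L), Submodule.map_top, Submodule.range_subtype]

lemma IsProjectiveCoverHom.finite {P M : ModuleCat.{0} A} {f : P ⟶ M}
    (hf : IsProjectiveCoverHom A f) [Module.Finite A M] : Module.Finite A P := by
  obtain ⟨n, g, hg⟩ := Module.Finite.exists_fin' A M
  have hfs := (ModuleCat.epi_iff_surjective f).1 hf.2.1
  obtain ⟨h, hh⟩ := Module.projective_lifting_property f.hom g hfs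
  have hepi : Epi (ModuleCat.ofHom h) := by
    refine hf.2.2 _ _ ((ModuleCat.epi_iff_surjective _).2 ?_)
    change Function.Surjective (f.hom ∘ₗ h)
    rwa [hh]
  exact .of_surjective h ((ModuleCat.epi_iff_surjective _).1 hepi)

end CoversAndEnvelopes

section EssentialExtensions

variable {R E : Type*} [Ring R] [AddCommGroup E] [Module R E]

lemma exists_maximal_disjoint (N : Submodule R E) :
    ∃ C : Submodule R E, Maximal (Disjoint · N) C :=
  zorn_le₀ {C | Disjoint C N} fun c hc hchain =>
    ⟨sSup c, hchain.directedOn.disjoint_sSup_left.2 hc, fun _ => le_sSup⟩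

lemma eq_bot_of_comap_mkQ_comp_subtype_eq_bot {N C : Submodule R E}
    (hC : Maximal (Disjoint · N) C) {L : Submodule R (E ⧸ C)}
    (hL : L.comap (C.mkQ ∘ₗ N.subtype) = ⊥) : L = ⊥ := by
  have hdisj : Disjoint (L.comap C.mkQ) N := by
    rwa [disjoint_comm, Submodule.disjoint_iff_comap_eq_bot, ← Submodule.comap_comp]
  have hle : C ≤ L.comap C.mkQ := by
    simpa only [Submodule.ker_mkQ] using C.mkQ.ker_le_comap (p := L)
  apply Submodule.comap_injective_of_surjective C.mkQ_surjective
  rw [← hC.eq_of_le hdisj hle, Submodule.comap_bot, Submodule.ker_mkQ]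

/-- `N` is an essential extension of `M`, both viewed inside an ambient module `E`. -/
def IsEssentialExtension (M N : Submodule R E) : Prop :=
  M ≤ N ∧ ∀ L ≤ N, Disjoint L M → L = ⊥

lemma exists_maximal_isEssentialExtension (M : Submodule R E) :
    ∃ N, Maximal (IsEssentialExtension M) N := by
  have hM : IsEssentialExtension M M :=
    ⟨le_rfl, fun L hL hLM => disjoint_self.1 (hLM.mono_right hL)⟩
  suffices ∀ c ⊆ {N | IsEssentialExtension M N}, IsChain (· ≤ ·) c → ∀ N ∈ c,
      ∃ ub ∈ {N | IsEssentialExtension M N}, ∀ L ∈ c, L ≤ ub by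
    obtain ⟨N, -, hN⟩ := zorn_le_nonempty₀ _ this M hM
    exact ⟨N, hN⟩
  intro c hc hchain N hN
  refine ⟨sSup c, ⟨(hc hN).1.trans (le_sSup hN), fun L hL hLM => ?_⟩, fun _ => le_sSup⟩
  rw [Submodule.eq_bot_iff]
  intro x hx
  obtain ⟨N', hN', hxN'⟩ := (Submodule.mem_sSup_of_directed ⟨N, hN⟩ hchain.directedOn).1 (hL hx)
  rw [← Submodule.span_singleton_eq_bot (R := R)]
  refine (hc hN').2 _ ((Submodule.span_singleton_le_iff_mem _ _).2 hxN') (hLM.mono_left ?_)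
  exact (Submodule.span_singleton_le_iff_mem _ _).2 hx

end EssentialExtensions

/-- For a maximal complement `C` of `N`, the inclusion of `N` extends along `N → E ⧸ C` to a map
whose range is an essential extension of `M` containing `N`, hence equal to `N`. -/
theorem exists_retraction_of_maximal_isEssentialExtension {R : Type*} {E : Type*} [Ring R]
    [AddCommGroup E] [Module R E] [Module.Injective R E] {M N : Submodule R E}
    (hN : Maximal (IsEssentialExtension M) N) : ∃ r : E →ₗ[R] N, r ∘ₗ N.subtype = .id := by
  obtain ⟨C, hC⟩ := exists_maximal_disjoint N
  have hk : Function.Injective (C.mkQ ∘ₗ N.subtype) := by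
    rw [← LinearMap.ker_eq_bot, LinearMap.ker_comp, Submodule.ker_mkQ,
      ← Submodule.disjoint_iff_comap_eq_bot]
    exact hC.prop.symm
  obtain ⟨h, hh⟩ := Module.Injective.out (C.mkQ ∘ₗ N.subtype) hk N.subtype
  have hhk : h ∘ₗ (C.mkQ ∘ₗ N.subtype) = N.subtype := LinearMap.ext hh
  have hNh : N ≤ LinearMap.range h := fun x hx => ⟨_, hh ⟨x, hx⟩⟩
  have hess : IsEssentialExtension M (LinearMap.range h) := by
    refine ⟨hN.prop.1.trans hNh, fun L hL hLM => ?_⟩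
    have hLN : Disjoint N L :=
      disjoint_iff.2 (hN.prop.2 _ inf_le_left (hLM.mono_left inf_le_right))
    have hLh : L.comap h = ⊥ := by
      apply eq_bot_of_comap_mkQ_comp_subtype_eq_bot hC
      rwa [← Submodule.comap_comp, hhk, ← Submodule.disjoint_iff_comap_eq_bot]
    rw [← Submodule.map_comap_eq_of_le hL, hLh, Submodule.map_bot]
  have hrange : ∀ x, h (C.mkQ x) ∈ N := fun x => hN.eq_of_le hess hNh ▸ LinearMap.mem_range_self h _
  exact ⟨(h ∘ₗ C.mkQ).codRestrict N hrange, LinearMap.ext fun x => Subtype.ext (hh x)⟩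

theorem exists_isInjectiveEnvelopeHom {A : Type} [Ring A] (M : ModuleCat.{0} A) :
    ∃ (I : ModuleCat.{0} A) (f : M ⟶ I), IsInjectiveEnvelopeHom A f := by
  let E : ModuleCat.{0} A := Injective.under M
  have hE : Module.Injective A E :=
    Module.injective_module_of_injective_object (inj := Injective.injective_under M)
  let i : M →ₗ[A] E := (Injective.ι M).hom
  have hi : LinearMap.ker i = ⊥ := (ModuleCat.mono_iff_ker_eq_bot _).1 inferInstance
  obtain ⟨N, hN⟩ := exists_maximal_isEssentialExtension (LinearMap.range i)
  obtain ⟨r, hr⟩ := exists_retraction_of_maximal_isEssentialExtension hN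
  let j : M →ₗ[A] N := i.codRestrict N fun x => hN.prop.1 (LinearMap.mem_range_self i x)
  let retract : Retract (ModuleCat.of A N) E :=
    { i := ModuleCat.ofHom N.subtype
      r := ModuleCat.ofHom r
      retract := ModuleCat.hom_ext hr }
  refine ⟨ModuleCat.of A N, ModuleCat.ofHom j,
    isInjectiveEnvelopeHom_iff.2 ⟨retract.injective, ?_, fun L hL => ?_⟩⟩
  · rwa [ModuleCat.mono_iff_ker_eq_bot, ModuleCat.hom_ofHom, LinearMap.ker_codRestrict]
  · apply Submodule.map_injective_of_injective N.subtype_injective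
    rw [Submodule.map_bot]
    refine hN.prop.2 _ (Submodule.map_subtype_le N L) ?_
    rw [disjoint_comm, Submodule.disjoint_def]
    rintro _ ⟨m, rfl⟩ ⟨y, hy, hym⟩
    have hm : m ∈ L.comap j := by
      have : j m = y := Subtype.ext hym.symm
      rwa [Submodule.mem_comap, this]
    change m ∈ L.comap (ModuleCat.ofHom j).hom at hm
    rw [hL, Submodule.mem_bot] at hm
    rw [hm, map_zero]

section Uniserial

variable {A : Type} [Ring A] {X M P I Z : ModuleCat.{0} A}

lemma IsUniserial.of_mono (hM : IsUniserial A M) (f : X ⟶ M) [Mono f] : IsUniserial A X := by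
  intro N₁ N₂
  have hf : Function.Injective f.hom := (ModuleCat.mono_iff_injective f).1 inferInstance
  simpa only [Submodule.map_le_map_iff_of_injective hf] using hM (N₁.map f.hom) (N₂.map f.hom)

lemma IsUniserial.of_epi (hM : IsUniserial A M) (f : M ⟶ X) [Epi f] : IsUniserial A X := by
  intro N₁ N₂
  have hf : Function.Surjective f.hom := (ModuleCat.epi_iff_surjective f).1 inferInstance
  simpa only [Submodule.comap_le_comap_iff_of_surjective hf] using
    hM (N₁.comap f.hom) (N₂.comap f.hom)

lemma isUniserial_of_isSimpleModule (hM : IsSimpleModule A M) : IsUniserial A M := by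
  intro N₁ N₂
  rcases eq_bot_or_eq_top N₁ with rfl | rfl
  · exact Or.inl bot_le
  · exact Or.inr le_top

lemma exists_le_length_span_singleton (h : ∀ x : M, ∃ y, A ∙ x < A ∙ y) (n : ℕ) :
    ∃ x : M, n ≤ Module.length A (A ∙ x) := by
  induction n with
  | zero => exact ⟨0, zero_le⟩
  | succ n ih =>
    obtain ⟨x, hx⟩ := ih
    obtain ⟨y, hxy⟩ := h x
    refine ⟨y, ?_⟩
    rw [Module.length_submodule] at hx ⊢
    push_cast
    exact (add_le_add_left hx 1).trans (Order.height_add_one_le hxy)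

theorem IsUniserial.exists_span_singleton_eq_top [IsArtinianRing A] (hM : IsUniserial A M) :
    ∃ x : M, A ∙ x = ⊤ := by
  by_contra! hne
  have hlt : ∀ x : M, ∃ y, A ∙ x < A ∙ y := by
    intro x
    obtain ⟨y, -, hy⟩ := SetLike.exists_of_lt (hne x).lt_top
    have hyx : ¬ (A ∙ y) ≤ A ∙ x := by rwa [Submodule.span_singleton_le_iff_mem]
    exact ⟨y, ((hM _ _).resolve_right hyx).lt_of_not_ge hyx⟩
  obtain ⟨x, hx⟩ := exists_le_length_span_singleton hlt ((Module.length A A).toNat + 1)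
  have hle : Module.length A (A ∙ x) ≤ Module.length A A := by
    rw [LinearMap.span_singleton_eq_range]
    exact Module.length_le_of_surjective _ (LinearMap.surjective_rangeRestrict _)
  rw [Nat.cast_add, ENat.natCast_toNat Module.length_ne_top] at hx
  exact (ENat.lt_add_one_iff Module.length_ne_top).2 le_rfl |>.not_ge (hx.trans hle)

theorem IsUniserial.finite [IsArtinianRing A] (hM : IsUniserial A M) : Module.Finite A M := by
  obtain ⟨x, hx⟩ := hM.exists_span_singleton_eq_top
  exact ⟨⟨{x}, by rw [Finset.coe_singleton, hx]⟩⟩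

theorem isUniserial_of_isProjectiveCoverHom [IsArtinianRing A] (hNak : IsNakayama A) {f : P ⟶ X}
    (hf : IsProjectiveCoverHom A f) (hX : IsUniserial A X) : IsUniserial A P := by
  obtain ⟨-, hepi, hsup⟩ := isProjectiveCoverHom_iff.1 hf
  have hsurj := (ModuleCat.epi_iff_surjective f).1 hepi
  rcases subsingleton_or_nontrivial P with hP | hP
  · exact fun N₁ N₂ => Or.inl (Subsingleton.elim N₁ N₂).le
  obtain ⟨x, hx⟩ := hX.exists_span_singleton_eq_top
  obtain ⟨p, rfl⟩ := hsurj x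
  have hp : A ∙ p = ⊤ := hsup _ (by rw [Submodule.map_span, Set.image_singleton, hx])
  have hfin : Module.Finite A P := ⟨⟨{p}, by rw [Finset.coe_singleton, hp]⟩⟩
  refine hNak P hfin ⟨hP, fun N₁ N₂ hc => ?_⟩
  have htop : N₁.map f.hom ⊔ N₂.map f.hom = ⊤ := by
    rw [← Submodule.map_sup, hc.sup_eq_top, Submodule.map_top, LinearMap.range_eq_top.2 hsurj]
  rcases hX (N₁.map f.hom) (N₂.map f.hom) with hle | hle
  · rw [sup_eq_right.2 hle] at htop
    exact Or.inl (hc.disjoint.eq_bot_of_le (hsup _ htop ▸ le_top))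
  · rw [sup_eq_left.2 hle] at htop
    exact Or.inr (hc.symm.disjoint.eq_bot_of_le (hsup _ htop ▸ le_top))

theorem isUniserial_of_forall_disjoint (hNak : IsNakayama A)
    (hM : ∀ N₁ N₂ : Submodule A M, Disjoint N₁ N₂ → N₁ = ⊥ ∨ N₂ = ⊥) : IsUniserial A M := by
  intro N₁ N₂
  by_contra! hcon
  obtain ⟨⟨x, hx₁, hx₂⟩, ⟨y, hy₂, hy₁⟩⟩ := hcon.imp SetLike.not_le_iff_exists.1
    SetLike.not_le_iff_exists.1
  let N : Submodule A M := Submodule.span A {x, y}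
  have hxN : x ∈ N := Submodule.subset_span (Set.mem_insert _ _)
  have hyN : y ∈ N := Submodule.subset_span (Set.mem_insert_of_mem _ rfl)
  have hfin : Module.Finite A N := Module.Finite.iff_fg.2 (Submodule.fg_span (Set.toFinite _))
  have hnontriv : Nontrivial N :=
    N.nontrivial_iff_ne_bot.2 fun h => hx₂ ((Submodule.eq_bot_iff N).1 h x hxN ▸ N₂.zero_mem)
  have hindec : Indec A (ModuleCat.of A N) := by
    refine ⟨hnontriv, fun (L₁ : Submodule A N) (L₂ : Submodule A N) hc => ?_⟩
    have hmap_bot : ∀ L : Submodule A N, L.map N.subtype = ⊥ → L = ⊥ := fun L hL =>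
      Submodule.map_injective_of_injective N.subtype_injective (hL.trans (Submodule.map_bot _).symm)
    refine (hM (L₁.map N.subtype) (L₂.map N.subtype) ?_).imp (hmap_bot L₁) (hmap_bot L₂)
    rw [disjoint_iff, ← Submodule.map_inf _ N.subtype_injective, hc.inf_eq_bot, Submodule.map_bot]
  rcases hNak _ hfin hindec (N₁.comap N.subtype) (N₂.comap N.subtype) with h | h
  · exact hx₂ (h (x := ⟨x, hxN⟩) hx₁)
  · exact hy₁ (h (x := ⟨y, hyN⟩) hy₂)

theorem isUniserial_of_isInjectiveEnvelopeHom (hNak : IsNakayama A) {f : X ⟶ I}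
    (hf : IsInjectiveEnvelopeHom A f) (hX : IsUniserial A X) : IsUniserial A I := by
  obtain ⟨-, hmono, hess⟩ := isInjectiveEnvelopeHom_iff.1 hf
  have hker : LinearMap.ker f.hom = ⊥ := (ModuleCat.mono_iff_ker_eq_bot f).1 hmono
  refine isUniserial_of_forall_disjoint hNak fun N₁ N₂ hN => ?_
  have hinf : N₁.comap f.hom ⊓ N₂.comap f.hom = ⊥ := by
    rw [← Submodule.comap_inf, hN.eq_bot, Submodule.comap_bot, hker]
  rcases hX (N₁.comap f.hom) (N₂.comap f.hom) with hle | hle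
  · exact Or.inl (hess _ (by rwa [inf_eq_left.2 hle] at hinf))
  · exact Or.inr (hess _ (by rwa [inf_eq_right.2 hle] at hinf))

theorem IsUniserial.isIso_of_comp_eq_id (hZ : IsUniserial A Z) [Nontrivial X] {g : X ⟶ Z}
    {r : Z ⟶ X} (h : g ≫ r = 𝟙 X) : IsIso r := by
  have hrg : ∀ x, r.hom (g.hom x) = x := fun x => ConcreteCategory.congr_hom h x
  have : IsSplitEpi r := ⟨⟨g, h⟩⟩
  suffices Mono r from isIso_of_mono_of_isSplitEpi r
  rcases hZ (LinearMap.ker r.hom) (LinearMap.range g.hom) with hle | hle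
  · rw [ModuleCat.mono_iff_ker_eq_bot, Submodule.eq_bot_iff]
    intro z hz
    obtain ⟨x, rfl⟩ := hle hz
    rw [LinearMap.mem_ker, hrg] at hz
    rw [hz, map_zero]
  · obtain ⟨x, hx⟩ := exists_ne (0 : X)
    exact absurd ((hrg x).symm.trans (hle ⟨x, rfl⟩)) hx

end Uniserial

section Ext

variable {C : Type u} [Category.{v} C] [Abelian C]

lemma exists_hom_τ₃_eq {S T : ShortComplex C} [Projective S.X₂] (hT : T.ShortExact)
    (u : S.X₃ ⟶ T.X₃) : ∃ φ : S ⟶ T, φ.τ₃ = u := by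
  have := hT.epi_g
  have := hT.mono_f
  let b : S.X₂ ⟶ T.X₂ := Projective.factorThru (S.g ≫ u) T.g
  have hb : b ≫ T.g = S.g ≫ u := Projective.factorThru_comp _ _
  have hfb : (S.f ≫ b) ≫ T.g = 0 := by rw [Category.assoc, hb, S.zero_assoc, zero_comp]
  exact ⟨{ τ₁ := hT.exact.lift (S.f ≫ b) hfb, τ₂ := b, τ₃ := u,
           comm₁₂ := hT.exact.lift_f _ _, comm₂₃ := hb }, rfl⟩

variable [HasExt.{w} C] {S T : ShortComplex C} {X Y W J : C}

lemma extClass_comp_injective (hS : S.ShortExact) [Projective S.X₂] (n : ℕ) :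
    Function.Injective fun θ : Ext S.X₁ W (n + 1) => hS.extClass.comp θ (add_comm 1 (n + 1)) := by
  refine (injective_iff_map_eq_zero (hS.extClass.precomp W (add_comm 1 (n + 1)))).2 fun θ hθ => ?_
  obtain ⟨x, rfl⟩ := Ext.contravariant_sequence_exact₁ hS W θ (add_comm 1 (n + 1)) hθ
  rw [Ext.eq_zero_of_projective x, Ext.comp_zero]

lemma exists_comp_eq_of_extClass_comp_mk₀_eq_zero (hS : S.ShortExact) {α : S.X₁ ⟶ W}
    (h : hS.extClass.comp (Ext.mk₀ α) (add_zero 1) = 0) : ∃ g : S.X₂ ⟶ W, S.f ≫ g = α := by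
  obtain ⟨x, hx⟩ := Ext.contravariant_sequence_exact₁ hS W _ _ h
  obtain ⟨g, rfl⟩ := (Ext.mk₀_bijective _ _).2 x
  rw [Ext.mk₀_comp_mk₀] at hx
  exact ⟨g, (Ext.mk₀_bijective _ _).1 hx⟩

lemma mk₀_comp_extClass_comp (hS : S.ShortExact) (hT : T.ShortExact) (φ : S ⟶ T) {n m : ℕ}
    (θ : Ext T.X₁ W n) (h : 1 + n = m) :
    (Ext.mk₀ φ.τ₃).comp (hT.extClass.comp θ h) (zero_add m) =
      hS.extClass.comp ((Ext.mk₀ φ.τ₁).comp θ (zero_add n)) h := by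
  rw [← Ext.comp_assoc _ _ _ (zero_add 1) h (by lia),
    ← ShortComplex.ShortExact.extClass_naturality hS hT,
    Ext.comp_assoc _ _ _ (add_zero 1) (zero_add n) (by lia)]

/-- The map `Extⁿ(u, W) : Extⁿ(Y, W) → Extⁿ(X, W)` induced by `u : X ⟶ Y` is nonzero. Composing
such maps with connecting homomorphisms moves homological information between a syzygy of `u` and
a cosyzygy of `W`. -/
def ExtMapNeZero (n : ℕ) (u : X ⟶ Y) (W : C) : Prop :=
  ∃ θ : Ext Y W n, (Ext.mk₀ u).comp θ (zero_add n) ≠ 0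

lemma extMapNeZero_zero_iff {u : X ⟶ Y} : ExtMapNeZero 0 u W ↔ ∃ g : Y ⟶ W, u ≫ g ≠ 0 := by
  rw [ExtMapNeZero, (Ext.mk₀_bijective Y W).surjective.exists]
  simp only [Ext.mk₀_comp_mk₀, ne_eq, Ext.mk₀_eq_zero_iff]

lemma ExtMapNeZero.of_comp {X' Y' : C} {a : X' ⟶ X} {u : X ⟶ Y} {b : Y ⟶ Y'} {n : ℕ}
    (h : ExtMapNeZero n (a ≫ u ≫ b) W) : ExtMapNeZero n u W := by
  obtain ⟨θ, hθ⟩ := h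
  refine ⟨(Ext.mk₀ b).comp θ (zero_add n), fun h₀ => hθ ?_⟩
  rw [← Ext.mk₀_comp_mk₀_assoc, ← Ext.mk₀_comp_mk₀_assoc, h₀, Ext.comp_zero]

lemma ExtMapNeZero.τ₃ {n : ℕ} (hS : S.ShortExact) [Projective S.X₂] (hT : T.ShortExact)
    (φ : S ⟶ T) (h : ExtMapNeZero (n + 1) φ.τ₁ W) : ExtMapNeZero (n + 2) φ.τ₃ W := by
  obtain ⟨θ, hθ⟩ := h
  refine ⟨hT.extClass.comp θ (add_comm 1 (n + 1)), ?_⟩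
  rw [mk₀_comp_extClass_comp hS hT φ]
  exact ((extClass_comp_injective hS n).ne hθ).trans_eq (Ext.comp_zero _ _ _ _ _)

lemma extMapNeZero_one_τ₃ (hS : S.ShortExact) (hT : T.ShortExact) (φ : S ⟶ T) (α : T.X₁ ⟶ W)
    (h : ∀ g : S.X₂ ⟶ W, S.f ≫ g ≠ φ.τ₁ ≫ α) : ExtMapNeZero 1 φ.τ₃ W := by
  refine ⟨hT.extClass.comp (Ext.mk₀ α) (add_zero 1), fun h₀ => ?_⟩
  rw [mk₀_comp_extClass_comp hS hT φ, Ext.mk₀_comp_mk₀] at h₀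
  obtain ⟨g, hg⟩ := exists_comp_eq_of_extClass_comp_mk₀_eq_zero hS h₀
  exact h g hg

lemma ExtMapNeZero.map_cokernel {u : X ⟶ Y} {n : ℕ} (h : ExtMapNeZero (n + 1) u W)
    (f : W ⟶ J) [Mono f] [Injective J] : ExtMapNeZero n u (cokernel f) := by
  obtain ⟨θ, hθ⟩ := h
  have hS : (ShortComplex.mk f (cokernel.π f) (cokernel.condition f)).ShortExact :=
    { exact := ShortComplex.exact_cokernel f }
  obtain ⟨x, rfl⟩ := Ext.covariant_sequence_exact₁ Y hS θ (Ext.eq_zero_of_injective _) rfl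
  refine ⟨x, fun h₀ => hθ ?_⟩
  rw [← Ext.comp_assoc _ _ _ (zero_add n) rfl (by lia), h₀, Ext.zero_comp]

end Ext

section InjectiveDimension

variable {A : Type} [Ring A] {W X Y : ModuleCat.{0} A}

lemma InjDimLE.hasInjectiveDimensionLT {n : ℕ} (h : InjDimLE A n W) :
    HasInjectiveDimensionLT W (n + 1) := by
  induction h with
  | zero W h => infer_instance
  | succ n W I f hI hf _ ih =>
    have hS : (ShortComplex.mk f (cokernel.π f) (cokernel.condition f)).ShortExact :=
      { exact := ShortComplex.exact_cokernel f }
    exact hS.hasInjectiveDimensionLT_X₁ (n + 1) ih inferInstance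

lemma ExtMapNeZero.le_injDim {u : X ⟶ Y} {n : ℕ} (h : ExtMapNeZero n u W) : n ≤ injDim A W := by
  obtain ⟨θ, hθ⟩ := h
  refine le_sInf ?_
  rintro _ ⟨d, rfl, hd⟩
  by_contra! hlt
  have := hd.hasInjectiveDimensionLT
  have := HasInjectiveDimensionLT.subsingleton W (d + 1) n (ENat.natCast_lt_natCast.1 hlt) X
  exact hθ (Subsingleton.elim _ _)

end InjectiveDimension

section SyzygySequences

variable {A : Type} [Ring A] {M K V W : ModuleCat.{0} A} {S T : ShortComplex (ModuleCat.{0} A)}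

/-- A short exact sequence `0 ⟶ ΩM ⟶ P ⟶ M ⟶ 0` with `P ⟶ M` a projective cover. Morphisms between
two such sequences are the lifts of a map `M ⟶ M'` to first syzygies. -/
structure IsSyzygySequence (S : ShortComplex (ModuleCat.{0} A)) : Prop where
  shortExact : S.ShortExact
  isProjectiveCoverHom : IsProjectiveCoverHom A S.g

lemma IsSyzygyOf.exists_isSyzygySequence (h : IsSyzygyOf A M K) :
    ∃ (P : ModuleCat.{0} A) (i : K ⟶ P) (p : P ⟶ M) (w : i ≫ p = 0),
      IsSyzygySequence (ShortComplex.mk i p w) := by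
  obtain ⟨P, p, hp, ⟨e⟩⟩ := h
  have := hp.2.1
  have w : (e.hom ≫ kernel.ι p) ≫ p = 0 := by
    rw [Category.assoc, kernel.condition, comp_zero]
  let iso : ShortComplex.mk _ p w ≅ ShortComplex.mk _ p (kernel.condition p) :=
    ShortComplex.isoMk e (Iso.refl _) (Iso.refl _)
  have hexact := (ShortComplex.exact_iff_of_iso iso).2 (ShortComplex.exact_kernel p)
  exact ⟨P, _, p, w, { exact := hexact }, hp⟩

namespace IsSyzygySequence

lemma projective (hS : IsSyzygySequence S) : Projective S.X₂ := hS.isProjectiveCoverHom.1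

lemma epi_g (hS : IsSyzygySequence S) : Epi S.g := hS.isProjectiveCoverHom.2.1

lemma not_epi_f_comp (hS : IsSyzygySequence S) [Nontrivial W] (g : S.X₂ ⟶ W) :
    ¬ Epi (S.f ≫ g) := by
  intro hepi
  rw [ModuleCat.epi_iff_surjective] at hepi
  have hfg : ∀ k, S.g.hom (S.f.hom k) = 0 := fun k => ConcreteCategory.congr_hom S.zero k
  have hker : LinearMap.ker g.hom = ⊤ := by
    refine (isProjectiveCoverHom_iff.1 hS.isProjectiveCoverHom).2.2 _ (eq_top_iff.2 fun m _ => ?_)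
    obtain ⟨p, rfl⟩ := (ModuleCat.epi_iff_surjective _).1 hS.epi_g m
    obtain ⟨k, hk⟩ := hepi (g.hom p)
    refine ⟨p - S.f.hom k, ?_, by rw [map_sub, hfg, sub_zero]⟩
    change g.hom (S.f.hom k) = g.hom p at hk
    rw [SetLike.mem_coe, LinearMap.mem_ker, map_sub, hk, sub_self]
  obtain ⟨x, hx⟩ := exists_ne (0 : W)
  obtain ⟨k, rfl⟩ := hepi x
  exact hx (hker ▸ Submodule.mem_top : S.f.hom k ∈ LinearMap.ker g.hom)

lemma nontrivial_X₃ (hS : IsSyzygySequence S) [Nontrivial S.X₁] : Nontrivial S.X₃ := by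
  by_contra! hX₃
  have hzero : Epi (0 : S.X₂ ⟶ S.X₂) :=
    hS.isProjectiveCoverHom.2.2 _ 0 ((ModuleCat.epi_iff_surjective _).2 fun _ =>
      ⟨0, Subsingleton.elim _ _⟩)
  have := hS.shortExact.mono_f
  have := (IsZero.of_epi_zero S.X₂ S.X₂).of_mono S.f
  exact not_subsingleton S.X₁ (ModuleCat.subsingleton_of_isZero this)

lemma nontrivial_X₂ (hS : IsSyzygySequence S) [Nontrivial S.X₃] : Nontrivial S.X₂ :=
  ((ModuleCat.epi_iff_surjective _).1 hS.epi_g).nontrivial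

lemma epi_τ₂ (hS : IsSyzygySequence S) (hT : IsSyzygySequence T) (φ : S ⟶ T) [Epi φ.τ₃] :
    Epi φ.τ₂ := by
  have := hS.epi_g
  refine hT.isProjectiveCoverHom.2.2 _ _ ?_
  rw [φ.comm₂₃]
  infer_instance

variable [IsArtinianRing A]

lemma isUniserial_X₂ (hNak : IsNakayama A) (hS : IsSyzygySequence S) (h : IsUniserial A S.X₃) :
    IsUniserial A S.X₂ :=
  isUniserial_of_isProjectiveCoverHom hNak hS.isProjectiveCoverHom h

lemma isUniserial_X₁ (hNak : IsNakayama A) (hS : IsSyzygySequence S) (h : IsUniserial A S.X₃) :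
    IsUniserial A S.X₁ :=
  have := hS.shortExact.mono_f
  (hS.isUniserial_X₂ hNak h).of_mono S.f

lemma mono_τ₁ (hNak : IsNakayama A) (hS : IsSyzygySequence S) (hT : IsSyzygySequence T) (φ : S ⟶ T)
    [Epi φ.τ₃] (hSu : IsUniserial A S.X₃) [Nontrivial T.X₃] : Mono φ.τ₁ := by
  have := hS.epi_τ₂ hT φ
  have := hT.projective
  have := hT.nontrivial_X₂
  have : IsIso φ.τ₂ := (hS.isUniserial_X₂ hNak hSu).isIso_of_comp_eq_id
    (Projective.factorThru_comp (𝟙 T.X₂) φ.τ₂)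
  have := hS.shortExact.mono_f
  have : Mono (φ.τ₁ ≫ T.f) := by
    rw [φ.comm₁₂]
    infer_instance
  exact mono_of_mono φ.τ₁ T.f

lemma epi_τ₁ (hNak : IsNakayama A) (hS : IsSyzygySequence S) (hT : IsSyzygySequence T) (φ : S ⟶ T)
    [Mono φ.τ₃] (hTu : IsUniserial A T.X₃) [Nontrivial S.X₃] : Epi φ.τ₁ := by
  have hτ₃ : Function.Injective φ.τ₃.hom := (ModuleCat.mono_iff_injective _).1 inferInstance
  have hTf : Function.Injective T.f.hom :=
    (ModuleCat.mono_iff_injective _).1 hT.shortExact.mono_f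
  have hTfg : ∀ y, T.g.hom (T.f.hom y) = 0 := fun y => ConcreteCategory.congr_hom T.zero y
  have h₁₂ : ∀ x, T.f.hom (φ.τ₁.hom x) = φ.τ₂.hom (S.f.hom x) := fun x =>
    ConcreteCategory.congr_hom φ.comm₁₂ x
  have h₂₃ : ∀ p, T.g.hom (φ.τ₂.hom p) = φ.τ₃.hom (S.g.hom p) := fun p =>
    ConcreteCategory.congr_hom φ.comm₂₃ p
  rw [ModuleCat.epi_iff_surjective]
  rcases hT.isUniserial_X₂ hNak hTu (LinearMap.range φ.τ₂.hom) (LinearMap.range T.f.hom)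
    with hle | hle
  · obtain ⟨x, hx⟩ := exists_ne (0 : S.X₃)
    obtain ⟨p, rfl⟩ := (ModuleCat.epi_iff_surjective _).1 hS.epi_g x
    obtain ⟨y, hy⟩ := hle ⟨p, rfl⟩
    refine absurd (hτ₃ ?_) hx
    rw [← h₂₃, ← hy, hTfg, map_zero]
  · intro y
    obtain ⟨p, hp⟩ := hle ⟨y, rfl⟩
    have hgp : S.g.hom p = 0 := hτ₃ (by rw [← h₂₃, hp, hTfg, map_zero])
    obtain ⟨x, rfl⟩ := (ShortComplex.moduleCat_exact_iff S).1 hS.shortExact.exact p hgp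
    exact ⟨x, hTf ((h₁₂ x).trans hp)⟩

theorem extMapNeZero_one_of_epi (hNak : IsNakayama A) (hS : IsSyzygySequence S)
    (hT : IsSyzygySequence T) (φ : S ⟶ T) [Epi φ.τ₃] (hSu : IsUniserial A S.X₃) [Nontrivial S.X₁]
    [Nontrivial T.X₃] : ExtMapNeZero 1 φ.τ₃ T.X₁ := by
  refine extMapNeZero_one_τ₃ hS.shortExact hT.shortExact φ (𝟙 T.X₁) fun g hg => ?_
  rw [Category.comp_id] at hg
  let ψ : S ⟶ T :=
    { τ₁ := 0
      τ₂ := φ.τ₂ - g ≫ T.f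
      τ₃ := φ.τ₃
      comm₁₂ := by rw [zero_comp, Preadditive.comp_sub, ← φ.comm₁₂, reassoc_of% hg, sub_self]
      comm₂₃ := by
        rw [Preadditive.sub_comp, Category.assoc, T.zero, comp_zero, sub_zero, φ.comm₂₃] }
  have : Mono (0 : S.X₁ ⟶ T.X₁) := hS.mono_τ₁ hNak hT ψ hSu
  exact not_subsingleton S.X₁ (ModuleCat.subsingleton_of_isZero (IsZero.of_mono_zero S.X₁ T.X₁))

theorem extMapNeZero_one_of_mono (hNak : IsNakayama A) (hS : IsSyzygySequence S)
    (hT : IsSyzygySequence T) (φ : S ⟶ T) [Mono φ.τ₃] (hSu : IsUniserial A S.X₃)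
    (hTu : IsUniserial A T.X₃) [Nontrivial T.X₁] [IsSimpleModule A V] (q : S.X₁ ⟶ V) [Epi q] :
    ExtMapNeZero 1 φ.τ₃ V := by
  have hq : Function.Surjective q.hom := (ModuleCat.epi_iff_surjective q).1 inferInstance
  have := IsSimpleModule.nontrivial A V
  have := hq.nontrivial
  have := hS.nontrivial_X₃
  have hτ₁ : Epi φ.τ₁ := hS.epi_τ₁ hNak hT φ hTu
  have hker : LinearMap.ker φ.τ₁.hom ≤ LinearMap.ker q.hom := by
    rcases hS.isUniserial_X₁ hNak hSu (LinearMap.ker φ.τ₁.hom) (LinearMap.ker q.hom) with hle | hle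
    · exact hle
    · refine ((LinearMap.isCoatom_ker_of_surjective hq).le_iff_eq fun htop => ?_).1 hle |>.le
      obtain ⟨y, hy⟩ := exists_ne (0 : T.X₁)
      obtain ⟨x, rfl⟩ := (ModuleCat.epi_iff_surjective _).1 hτ₁ y
      exact hy (htop ▸ Submodule.mem_top : x ∈ LinearMap.ker φ.τ₁.hom)
  have hkerq : kernel.ι φ.τ₁ ≫ q = 0 := by
    ext x
    exact hker (ConcreteCategory.congr_hom (kernel.condition φ.τ₁) x)
  refine extMapNeZero_one_τ₃ hS.shortExact hT.shortExact φ (epiDesc φ.τ₁ q hkerq) fun g hg => ?_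
  rw [comp_epiDesc] at hg
  exact hS.not_epi_f_comp g (hg ▸ inferInstance)

end IsSyzygySequence

end SyzygySequences

section NthSyzygies

variable {A : Type} [Ring A] {M K V W X Y X' Y' : ModuleCat.{0} A} {n : ℕ}

lemma IsNthSyzygy.exists_isSyzygySequence (h : IsNthSyzygy A (n + 1) M K) :
    ∃ N, IsNthSyzygy A n M N ∧ ∃ (P : ModuleCat.{0} A) (i : K ⟶ P) (p : P ⟶ N) (w : i ≫ p = 0),
      IsSyzygySequence (ShortComplex.mk i p w) := by
  induction n generalizing M with
  | zero =>
    obtain ⟨N, ⟨P, f, hf, ⟨e⟩⟩, ⟨e'⟩⟩ := h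
    have hMK : IsSyzygyOf A M K := ⟨P, f, hf, ⟨e' ≪≫ e⟩⟩
    exact ⟨M, ⟨Iso.refl M⟩, hMK.exists_isSyzygySequence⟩
  | succ n ih =>
    obtain ⟨N, hMN, hNK⟩ := h
    obtain ⟨L, hNL, hLK⟩ := ih hNK
    exact ⟨L, ⟨N, hMN, hNL⟩, hLK⟩

lemma ProjDimLE.of_iso (h : ProjDimLE A n M) (e : M ≅ K) : ProjDimLE A n K := by
  induction h generalizing K with
  | zero M h => exact .zero K (.of_iso e h)
  | succ n M P f hP hf _ ih =>
    exact .succ n K P (f ≫ e.hom) hP inferInstance (ih (kernelCompMono f e.hom).symm)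

lemma IsNthSyzygy.projDimLE_of_subsingleton (h : IsNthSyzygy A (n + 1) M K) [Subsingleton K] :
    ProjDimLE A n M := by
  induction n generalizing M with
  | zero =>
    obtain ⟨N, ⟨P, f, hf, ⟨e⟩⟩, ⟨e'⟩⟩ := h
    have := hf.2.1
    have hzero : IsZero (kernel f) :=
      (ModuleCat.isZero_of_subsingleton K).of_iso (e' ≪≫ e).symm
    have : Mono f := Preadditive.mono_of_kernel_zero (hzero.eq_zero_of_src _)
    have : IsIso f := isIso_of_mono_of_epi f
    exact .zero M (.of_iso (asIso f) hf.1)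
  | succ n ih =>
    obtain ⟨N, ⟨P, f, hf, ⟨e⟩⟩, h⟩ := h
    exact .succ n M P f hf.1 hf.2.1 ((ih h).of_iso e)

lemma IsNthSyzygy.nontrivial_of_le_projDim (h : IsNthSyzygy A (n + 1) M K)
    (hM : (n + 1 : ℕ) ≤ projDim A M) : Nontrivial K := by
  by_contra! hK
  have hle : projDim A M ≤ n := sInf_le ⟨n, rfl, h.projDimLE_of_subsingleton⟩
  exact absurd (ENat.natCast_le_natCast.1 (hM.trans hle)) (Nat.not_succ_le_self n)

lemma IsNthSyzygy.extMapNeZero_id {k : ℕ} (h : IsNthSyzygy A n M K)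
    (hK : ExtMapNeZero (k + 1) (𝟙 K) W) : ExtMapNeZero (k + n + 1) (𝟙 M) W := by
  induction n generalizing M with
  | zero =>
    obtain ⟨e⟩ := h
    exact ExtMapNeZero.of_comp (a := e.hom) (b := e.inv) (by simpa using hK)
  | succ n ih =>
    obtain ⟨N, hMN, hNK⟩ := h
    obtain ⟨P, i, p, w, hS⟩ := hMN.exists_isSyzygySequence
    have := hS.projective
    exact (ih hNK).τ₃ hS.shortExact hS.shortExact (𝟙 _)

theorem IsNthSyzygy.le_injDim (h : IsNthSyzygy A n M K) [Nontrivial W] (q : K ⟶ W) [Epi q] :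
    n ≤ injDim A W := by
  cases n with
  | zero => exact zero_le
  | succ n =>
    obtain ⟨N, hMN, P, i, p, w, hS⟩ := h.exists_isSyzygySequence
    have hN : ExtMapNeZero 1 (𝟙 N) W :=
      extMapNeZero_one_τ₃ hS.shortExact hS.shortExact (𝟙 _) q fun g hg =>
        hS.not_epi_f_comp g (by rw [hg, ShortComplex.id_τ₁, Category.id_comp]; infer_instance)
    have hM := hMN.extMapNeZero_id (k := 0) hN
    rw [zero_add] at hM
    exact hM.le_injDim

variable [IsArtinianRing A]

lemma exists_isNthSyzygy (n : ℕ) (M : ModuleCat.{0} A) [Module.Finite A M] :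
    ∃ K, IsNthSyzygy A n M K := by
  induction n generalizing M with
  | zero => exact ⟨M, ⟨Iso.refl M⟩⟩
  | succ n ih =>
    obtain ⟨P, f, hf⟩ := exists_isProjectiveCoverHom M
    have := hf.finite
    have hι : Function.Injective (kernel.ι f).hom :=
      (ModuleCat.mono_iff_injective _).1 inferInstance
    have : Module.Finite A ↑(kernel f) := .of_injective _ hι
    obtain ⟨K, hK⟩ := ih (kernel f)
    exact ⟨K, kernel f, ⟨P, f, hf, ⟨Iso.refl _⟩⟩, hK⟩

lemma IsNthSyzygy.isUniserial (hNak : IsNakayama A) (h : IsNthSyzygy A n M K)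
    (hM : IsUniserial A M) : IsUniserial A K := by
  induction n generalizing M with
  | zero =>
    obtain ⟨e⟩ := h
    exact hM.of_mono e.hom
  | succ n ih =>
    obtain ⟨N, hMN, hNK⟩ := h
    obtain ⟨P, i, p, w, hS⟩ := hMN.exists_isSyzygySequence
    exact ih hNK (hS.isUniserial_X₁ hNak hM)

theorem exists_hom_isNthSyzygy (hNak : IsNakayama A) (u : X ⟶ Y) [Mono u] (hXu : IsUniserial A X)
    (hYu : IsUniserial A Y) (hX : IsNthSyzygy A n X X') (hY : IsNthSyzygy A n Y Y')
    [Nontrivial X'] [Nontrivial Y'] :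
    ∃ v : X' ⟶ Y', (Even n → Mono v) ∧ (Odd n → Epi v) ∧
      ∀ k W, ExtMapNeZero (k + 1) v W → ExtMapNeZero (k + n + 1) u W := by
  induction n generalizing X' Y' with
  | zero =>
    obtain ⟨⟨a⟩, ⟨b⟩⟩ := And.intro hX hY
    exact ⟨a.hom ≫ u ≫ b.inv, fun _ => inferInstance, fun h => absurd h Nat.not_odd_zero,
      fun k W h => h.of_comp⟩
  | succ n ih =>
    obtain ⟨X₁, hXX₁, P, i, p, w, hS⟩ := hX.exists_isSyzygySequence
    obtain ⟨Y₁, hYY₁, Q, j, r, w', hT⟩ := hY.exists_isSyzygySequence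
    have : Nontrivial X₁ := hS.nontrivial_X₃
    have : Nontrivial Y₁ := hT.nontrivial_X₃
    have := hS.projective
    obtain ⟨v, hmono, hepi, hext⟩ := ih hXX₁ hYY₁
    obtain ⟨φ, rfl⟩ := exists_hom_τ₃_eq (S := .mk i p w) hT.shortExact v
    refine ⟨φ.τ₁, fun hn => ?_, fun hn => ?_, fun k W h => ?_⟩
    · have := hepi (Nat.not_even_iff_odd.1 (Nat.even_add_one.1 hn))
      exact hS.mono_τ₁ hNak hT φ (hXX₁.isUniserial hNak hXu)
    · have := hmono (Nat.not_odd_iff_even.1 (Nat.odd_add_one.1 hn))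
      exact hS.epi_τ₁ hNak hT φ (hYY₁.isUniserial hNak hYu)
    · have := hext (k + 1) W (h.τ₃ hS.shortExact hT.shortExact φ)
      rwa [show k + (n + 1) + 1 = k + 1 + n + 1 by lia]

theorem extMapNeZero_of_odd (hNak : IsNakayama A) (hn : Odd n) (u : X ⟶ Y) [Mono u]
    (hXu : IsUniserial A X) (hYu : IsUniserial A Y) (hX : IsNthSyzygy A (n + 1) X X')
    (hY : IsNthSyzygy A (n + 1) Y Y') [Nontrivial X'] [Nontrivial Y'] :
    ExtMapNeZero (n + 1) u Y' := by
  obtain ⟨X₁, hXX₁, P, i, p, w, hS⟩ := hX.exists_isSyzygySequence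
  obtain ⟨Y₁, hYY₁, Q, j, r, w', hT⟩ := hY.exists_isSyzygySequence
  have : Nontrivial X₁ := hS.nontrivial_X₃
  have : Nontrivial Y₁ := hT.nontrivial_X₃
  have := hS.projective
  obtain ⟨v, -, hepi, hext⟩ := exists_hom_isNthSyzygy hNak u hXu hYu hXX₁ hYY₁
  obtain ⟨φ, rfl⟩ := exists_hom_τ₃_eq (S := .mk i p w) hT.shortExact v
  have := hepi hn
  have hφ : ExtMapNeZero 1 φ.τ₃ Y' :=
    hS.extMapNeZero_one_of_epi hNak hT φ (hXX₁.isUniserial hNak hXu)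
  simpa only [zero_add] using hext 0 Y' hφ

theorem extMapNeZero_of_even (hNak : IsNakayama A) (hn : Even n) (u : X ⟶ Y) [Mono u]
    (hXu : IsUniserial A X) (hYu : IsUniserial A Y) (hX : IsNthSyzygy A (n + 1) X X')
    (hY : IsNthSyzygy A (n + 1) Y Y') [Nontrivial Y'] [IsSimpleModule A V] (q : X' ⟶ V) [Epi q] :
    ExtMapNeZero (n + 1) u V := by
  obtain ⟨X₁, hXX₁, P, i, p, w, hS⟩ := hX.exists_isSyzygySequence
  obtain ⟨Y₁, hYY₁, Q, j, r, w', hT⟩ := hY.exists_isSyzygySequence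
  have := IsSimpleModule.nontrivial A V
  have : Nontrivial X' := ((ModuleCat.epi_iff_surjective q).1 inferInstance).nontrivial
  have : Nontrivial X₁ := hS.nontrivial_X₃
  have : Nontrivial Y₁ := hT.nontrivial_X₃
  have := hS.projective
  obtain ⟨v, hmono, -, hext⟩ := exists_hom_isNthSyzygy hNak u hXu hYu hXX₁ hYY₁
  obtain ⟨φ, rfl⟩ := exists_hom_τ₃_eq (S := .mk i p w) hT.shortExact v
  have := hmono hn
  have hφ : ExtMapNeZero 1 φ.τ₃ V := hS.extMapNeZero_one_of_mono hNak hT φ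
    (hXX₁.isUniserial hNak hXu) (hYY₁.isUniserial hNak hYu) q
  simpa only [zero_add] using hext 0 V hφ

end NthSyzygies

section NthCosyzygies

variable {A : Type} [Ring A] {T I W X Y Z Z' : ModuleCat.{0} A} {n : ℕ}

lemma IsNthCosyzygy.of_iso (h : IsNthCosyzygy A n W Z) (e : Z' ≅ Z) : IsNthCosyzygy A n W Z' := by
  induction n generalizing W with
  | zero => exact h.map (e ≪≫ ·)
  | succ n ih =>
    obtain ⟨Y, hWY, hYZ⟩ := h
    exact ⟨Y, hWY, ih hYZ⟩

theorem ExtMapNeZero.exists_isNthCosyzygy (hNak : IsNakayama A) {u : X ⟶ Y}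
    (hW : IsUniserial A W) (h : ExtMapNeZero n u W) :
    ∃ Z, IsNthCosyzygy A n W Z ∧ IsUniserial A Z ∧ ∃ g : Y ⟶ Z, u ≫ g ≠ 0 := by
  induction n generalizing W with
  | zero => exact ⟨W, ⟨Iso.refl W⟩, hW, extMapNeZero_zero_iff.1 h⟩
  | succ n ih =>
    obtain ⟨J, f, hf⟩ := exists_isInjectiveEnvelopeHom W
    have := hf.1
    have := hf.2.1
    have hJ := isUniserial_of_isInjectiveEnvelopeHom hNak hf hW
    obtain ⟨Z, hZ, hZu⟩ := ih (hJ.of_epi (cokernel.π f)) (h.map_cokernel f)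
    exact ⟨Z, ⟨cokernel f, ⟨J, f, hf, ⟨Iso.refl _⟩⟩, hZ⟩, hZu⟩

theorem IsInjectiveEnvelopeHom.isNthCosyzygy [IsSimpleModule A T] {j : T ⟶ I}
    (hj : IsInjectiveEnvelopeHom A j) (hNak : IsNakayama A) (hW : IsUniserial A W)
    (h : ExtMapNeZero n j W) : IsNthCosyzygy A n W I := by
  obtain ⟨Z, hWZ, hZ, g, hjg⟩ := h.exists_isNthCosyzygy hNak hW
  obtain ⟨hI, hmono, hess⟩ := hj
  have hjg_mono : Mono (j ≫ g) := (ModuleCat.mono_iff_injective _).2 <|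
    (j ≫ g).hom.injective_or_eq_zero.resolve_right fun h₀ => hjg (ModuleCat.hom_ext h₀)
  have := hess Z g hjg_mono
  have := IsSimpleModule.nontrivial A T
  have : Nontrivial I := ((ModuleCat.mono_iff_injective j).1 hmono).nontrivial
  have hsplit : g ≫ Injective.factorThru (𝟙 I) g = 𝟙 I := Injective.comp_factorThru _ _
  have := hZ.isIso_of_comp_eq_id hsplit
  exact hWZ.of_iso (asIso (Injective.factorThru (𝟙 I) g)).symm

end NthCosyzygies

end ArtinAlg

open ArtinAlg in
theorem statement_16_general (A : Type) [Ring A] [IsArtinianRing A] (hNak : IsNakayama A)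
    (S T : ModuleCat.{0} A) (hS : IsSimpleModule A ↥S) (hT : IsSimpleModule A ↥T)
    (z : ℕ) (I P : ModuleCat.{0} A) (hI : IsInjEnvOf A T I) (hP : IsProjCoverOf A S P) :
    (Even z → IsNthSyzygy A z I P → (z : ℕ∞) ≤ projDim A T →
      IsNthCosyzygy A z P I ∧ (z : ℕ∞) ≤ injDim A S) ∧
    (Odd z → IsNthSyzygy A z T P → (z : ℕ∞) ≤ projDim A I →
      IsNthCosyzygy A z S I ∧ (z : ℕ∞) ≤ injDim A P) := by
  obtain ⟨j, hj⟩ := hI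
  obtain ⟨q, hq⟩ := hP
  have := hj.2.1
  have := hq.2.1
  have := IsSimpleModule.nontrivial A S
  have : Nontrivial P := ((ModuleCat.epi_iff_surjective q).1 hq.2.1).nontrivial
  have hSu := isUniserial_of_isSimpleModule hS
  have hTu := isUniserial_of_isSimpleModule hT
  have hPu := isUniserial_of_isProjectiveCoverHom hNak hq hSu
  have hIu := isUniserial_of_isInjectiveEnvelopeHom hNak hj hTu
  constructor
  · intro hz hIP hpd
    refine ⟨?_, hIP.le_injDim q⟩
    cases z with
    | zero => exact hIP.map Iso.symm
    | succ n =>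
      obtain ⟨K, hTK⟩ := exists_isNthSyzygy (n + 1) T
      have := hTK.nontrivial_of_le_projDim hpd
      have hn := Nat.not_even_iff_odd.1 (Nat.even_add_one.1 hz)
      exact hj.isNthCosyzygy hNak hPu (extMapNeZero_of_odd hNak hn j hTu hIu hTK hIP)
  · intro hz hTP hpd
    refine ⟨?_, hTP.le_injDim (𝟙 P)⟩
    cases z with
    | zero => exact absurd hz Nat.not_odd_zero
    | succ n =>
      have := hIu.finite
      obtain ⟨K, hIK⟩ := exists_isNthSyzygy (n + 1) I
      have := hIK.nontrivial_of_le_projDim hpd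
      have hn := Nat.not_odd_iff_even.1 (Nat.odd_add_one.1 hz)
      exact hj.isNthCosyzygy hNak hSu (extMapNeZero_of_even hNak hn j hTu hIu hTP hIK q)

open ArtinAlg in
/-- Let `A` be a Nakayama algebra, `S` and `T` simple modules and
`z ∈ ℕ`. (a) If `z` is even, `Ω^z (I T) = P S` and `pd T ≥ z`, then `Σ^z (P S) = I T`
and `id S ≥ z`. (b) If `z` is odd, `Ω^z T = P S` and `pd (I T) ≥ z`, then
`Σ^z S = I T` and `id (P S) ≥ z`. -/
theorem statement_16 (R : Type) [CommRing R] [IsArtinianRing R]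
    (A : Type) [Ring A] [Algebra R A] [Module.Finite R A]
    (hNak : IsNakayama A)
    (S T : ModuleCat.{0} A) (hS : IsSimpleModule A ↥S) (hT : IsSimpleModule A ↥T)
    (z : ℕ) (I P : ModuleCat.{0} A) (hI : IsInjEnvOf A T I) (hP : IsProjCoverOf A S P) :
    (Even z → IsNthSyzygy A z I P → (z : ℕ∞) ≤ projDim A T →
      IsNthCosyzygy A z P I ∧ (z : ℕ∞) ≤ injDim A S) ∧
    (Odd z → IsNthSyzygy A z T P → (z : ℕ∞) ≤ projDim A I →
      IsNthCosyzygy A z S I ∧ (z : ℕ∞) ≤ injDim A P) :=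
  have : IsArtinianRing A := isArtinian_of_tower R inferInstance
  statement_16_general A hNak S T hS hT z I P hI hP
end
end

section
/- Let A be a Nakayama algebra, E the set of isomorphism classes of simple modules, and define h(S) = top(Ω^{e(S)} NS) and h*(S) = soc(Σ^{e*(S)} N*S). Then h is a permutation of E with inverse h*, and e*(h(S)) = e(S) for every simple module S. -/
open CategoryTheory CategoryTheory.Limits

noncomputable section

/-! The simple modules of a Nakayama algebra are arranged by the relation “`T` is the second radical
layer of the projective cover of `S`” into cycles and paths; closing the paths up gives a
permutation of the simple modules, hence a family `S_x` indexed by `x : ℤ`. A uniserial module is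
determined up to its position by an interval `[x, y)`, its radical layers being `S_x, …, S_{y-1}`.
The longest interval starting at `x` is the projective cover `[x, p x)` of `S_x`, the longest
interval ending at `y` is the injective envelope `[q y, y)` of `S_{y-1}`, and `q` is left adjoint
to `p`. As `Ω [x, y) = [y, p x)` and `Σ [x, y) = [q y, x)`, the iterated (co)syzygies are read off
the iterates of `p` and `q`, and “`e(S) = e` and `h(S) = T`” becomes a condition on these iterates
that is symmetric under reversing the order of `ℤ` and exchanging `p` with `q`. The same symmetry
exchanges `(e, h)` with `(e*, h*)`, so `e*(h(S)) = e(S)` and `h*(h(S)) = S`. The condition can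
always be met because the ranges of the powers of `p`, which commute with a translation of `ℤ`,
stabilise. Finally `h` is injective, hence a permutation of the finite set of simple modules. -/

namespace Nakayama

/-- The `m`-th syzygy of an interval module `[x, y)` is the interval module
`[syzygyEnd p x y m, syzygyEnd p x y (m + 1))`. Dually, its `m`-th cosyzygy is
`[syzygyEnd q y x (m + 1), syzygyEnd q y x m)`. -/
def syzygyEnd {α : Type*} (p : α → α) (x y : α) : ℕ → α
  | 0 => x
  | 1 => y
  | m + 2 => p (syzygyEnd p x y m)

theorem syzygyEnd_succ {α : Type*} (p : α → α) (x y : α) :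
    ∀ m, syzygyEnd p x y (m + 1) = syzygyEnd p y (p x) m
  | 0 => rfl
  | 1 => rfl
  | m + 2 => congrArg p (syzygyEnd_succ p x y m)

theorem syzygyEnd_two_mul {α : Type*} (p : α → α) (x y : α) (k : ℕ) :
    syzygyEnd p x y (2 * k) = p^[k] x := by
  induction k with
  | zero => rfl
  | succ k ih => rw [Function.iterate_succ_apply', ← ih]; rfl

theorem syzygyEnd_two_mul_add_one {α : Type*} (p : α → α) (x y : α) (k : ℕ) :
    syzygyEnd p x y (2 * k + 1) = p^[k] y := by
  induction k with
  | zero => rfl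
  | succ k ih => rw [Function.iterate_succ_apply', ← ih]; rfl

section Order

variable {α : Type*} [LinearOrder α] {p q : α → α}

theorem galoisConnection_iterate (gc : GaloisConnection q p) (k : ℕ) :
    GaloisConnection q^[k] p^[k] := by
  induction k with
  | zero => exact GaloisConnection.id
  | succ k ih =>
    rw [Function.iterate_succ, Function.iterate_succ']
    exact gc.compose ih

/-- The relation “`e(S) = e` and `h(S) = T`” between the right end `y` of the interval of a simple
module `S` and the left end `t` of the interval of a simple module `T`. It is stated so that
reversing the order, which exchanges `p` with `q` and `y` with `t`, leaves it unchanged. -/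
inductive HomologicalPair (p q : α → α) : ℕ → α → α → Prop
  | even (k : ℕ) (y t : α) (ht : p^[k] (q y) = t) (hy : q^[k] (p t) = y)
      (hlt : ∀ j, j + 1 = k → p^[j] y < t) : HomologicalPair p q (2 * k) y t
  | odd (k : ℕ) (y t : α) (ht : p^[k] y = t) (hy : q^[k] t = y)
      (hlt_y : q^[k + 1] (p t) < y) (hlt_t : t < p^[k + 1] (q y)) :
      HomologicalPair p q (2 * k + 1) y t

theorem HomologicalPair.dual (gc : GaloisConnection q p) {e : ℕ} {y t : α}
    (h : HomologicalPair p q e y t) :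
    HomologicalPair (α := αᵒᵈ) q p e (OrderDual.toDual t) (OrderDual.toDual y) := by
  cases h with
  | even k _ _ ht hy hlt =>
    exact .even (α := αᵒᵈ) k _ _ hy ht fun j hj =>
      (galoisConnection_iterate gc j).lt_iff_lt.2 (hlt j hj)
  | odd k _ _ ht hy hlt_y hlt_t => exact .odd (α := αᵒᵈ) k _ _ hy ht hlt_t hlt_y

namespace HomologicalPair

variable {e : ℕ} {s y t : α}

theorem iterate_lt_iterate (gc : GaloisConnection q p) (h : HomologicalPair p q e y t) (hs : s < y)
    {j : ℕ} (hj : 2 * j ≤ e) : p^[j] s < p^[j] y := by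
  suffices ∃ k, j ≤ k ∧ p^[k] s < p^[k] y by
    obtain ⟨k, hjk, hk⟩ := this
    rw [← Nat.sub_add_cancel hjk, Function.iterate_add_apply, Function.iterate_add_apply] at hk
    exact (galoisConnection_iterate gc _).monotone_u.reflect_lt hk
  cases h with
  | even k _ _ ht hy hlt =>
    refine ⟨k, by lia, lt_of_not_ge fun hle => hs.not_ge ?_⟩
    have hpt : p t ≤ p^[k] y := (galoisConnection_iterate gc k _ _).1 hy.le
    exact hy ▸ (galoisConnection_iterate gc k _ _).2 (hpt.trans hle)
  | odd k _ _ ht hy hlt_y hlt_t =>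
    refine ⟨k, by lia, lt_of_not_ge fun hle => hs.not_ge ?_⟩
    exact hy ▸ (galoisConnection_iterate gc k _ _).2 (ht ▸ hle)

theorem iterate_lt_iterate_succ (gc : GaloisConnection q p) (h : HomologicalPair p q e y t)
    {j : ℕ} (hj : 2 * j + 1 ≤ e) : p^[j] y < p^[j + 1] (q y) := by
  suffices ∃ k, j ≤ k ∧ p^[k] y < p^[k + 1] (q y) by
    obtain ⟨k, hjk, hk⟩ := this
    rw [show k + 1 = (k - j) + (j + 1) by lia, Function.iterate_add_apply] at hk
    nth_rewrite 1 [← Nat.sub_add_cancel hjk] at hk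
    rw [Function.iterate_add_apply] at hk
    exact (galoisConnection_iterate gc _).monotone_u.reflect_lt hk
  cases h with
  | even k _ _ ht hy hlt =>
    obtain ⟨k, rfl⟩ := Nat.exists_eq_succ_of_ne_zero (show k ≠ 0 by lia)
    exact ⟨k, by lia, (hlt k rfl).trans_eq ht.symm⟩
  | odd k _ _ ht hy hlt_y hlt_t => exact ⟨k, by lia, ht.trans_lt hlt_t⟩

theorem syzygyEnd_lt_succ (gc : GaloisConnection q p) (h : HomologicalPair p q e y t) {x : α}
    (hqx : q y ≤ x) (hxy : x < y) {m : ℕ} (hm : m ≤ e) :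
    syzygyEnd p x y m < syzygyEnd p x y (m + 1) := by
  obtain ⟨j, rfl | rfl⟩ := m.even_or_odd'
  · rw [syzygyEnd_two_mul, syzygyEnd_two_mul_add_one]
    exact h.iterate_lt_iterate gc hxy hm
  · rw [syzygyEnd_two_mul_add_one, show 2 * j + 1 + 1 = 2 * (j + 1) by ring, syzygyEnd_two_mul]
    exact (h.iterate_lt_iterate_succ gc hm).trans_le
      ((galoisConnection_iterate gc _).monotone_u hqx)

theorem syzygyEnd_eq_of_even (h : HomologicalPair p q e y t) (he : Even e) :
    syzygyEnd p (q y) y e = t := by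
  cases h with
  | even k _ _ ht => rwa [syzygyEnd_two_mul]
  | odd k => exact absurd he (by simp)

theorem syzygyEnd_eq_of_odd (h : HomologicalPair p q e y t) (he : Odd e) (x : α) :
    syzygyEnd p x y e = t := by
  cases h with
  | even k => exact absurd he (by simp)
  | odd k _ _ ht => rwa [syzygyEnd_two_mul_add_one]

theorem syzygyEnd_stable_of_even (gc : GaloisConnection q p) (h : HomologicalPair p q e y t)
    (he : Even e) : syzygyEnd p (q y) y (e + 1) = syzygyEnd p (q y) y (e + 2) := by
  cases h with
  | odd k => exact absurd he (by simp)
  | even k _ _ ht hy hlt =>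
    rw [show 2 * k + 2 = 2 * (k + 1) by ring, syzygyEnd_two_mul_add_one, syzygyEnd_two_mul,
      Function.iterate_succ_apply', ht]
    refine le_antisymm ?_ ((galoisConnection_iterate gc k _ _).1 hy.le)
    rw [← ht, ← Function.iterate_succ_apply' p, Function.iterate_succ_apply]
    exact (galoisConnection_iterate gc k).monotone_u (gc.le_u_l y)

theorem syzygyEnd_stable_of_odd (gc : GaloisConnection q p) (h : HomologicalPair p q e y t)
    (hsy : s ⋖ y) (he : Odd e) : syzygyEnd p s y (e + 1) = syzygyEnd p s y (e + 2) := by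
  cases h with
  | even k => exact absurd he (by simp)
  | odd k _ _ ht hy hlt_y hlt_t =>
    rw [show 2 * k + 1 + 1 = 2 * (k + 1) by ring, show 2 * k + 1 + 2 = 2 * (k + 1) + 1 by ring,
      syzygyEnd_two_mul_add_one, syzygyEnd_two_mul]
    refine le_antisymm ((galoisConnection_iterate gc _).monotone_u hsy.le) ?_
    rw [Function.iterate_succ_apply', ht]
    exact (galoisConnection_iterate gc _ _ _).1 (hsy.le_of_lt hlt_y)

end HomologicalPair

theorem iterate_l_iterate_u_eq_of_covBy (gc : GaloisConnection q p) {s y : α} (hsy : s ⋖ y) {k : ℕ}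
    (hk : p^[k] s < p^[k] y) : q^[k] (p^[k] y) = y := by
  have gck := galoisConnection_iterate gc k
  refine (gck.l_u_le y).eq_of_not_lt fun hlt => hk.not_ge ?_
  exact (gck _ _).1 (hsy.le_of_lt hlt)

theorem exists_iterate_eq_of_mem_range (gc : GaloisConnection q p) {s y : α} (hsy : s ⋖ y) {k : ℕ}
    (hk : p^[k] y ∈ Set.range p^[k + 1]) :
    ∃ k, p^[k] y = p^[k + 1] (q y) ∨ p^[k + 1] s = p^[k + 1] y := by
  obtain ⟨x, hx⟩ := hk
  have mono := (galoisConnection_iterate gc k).monotone_u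
  rcases le_or_gt (q y) x with hyx | hxy
  · refine ⟨k, .inl (le_antisymm ?_ ?_)⟩
    · exact mono (gc.le_u_l y)
    · exact ((galoisConnection_iterate gc (k + 1)).monotone_u hyx).trans_eq hx
  · have hpx : p x ≤ s := hsy.le_of_lt (gc.lt_iff_lt.1 hxy)
    have hys : p^[k] y ≤ p^[k] s := hx ▸ mono hpx
    refine ⟨k, .inr ?_⟩
    rw [Function.iterate_succ_apply', Function.iterate_succ_apply', hys.antisymm (mono hsy.le)]

theorem HomologicalPair.exists_of_mem_range (gc : GaloisConnection q p) {s y : α} (hsy : s ⋖ y)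
    {k : ℕ} (hk : p^[k] y ∈ Set.range p^[k + 1]) : ∃ e t, HomologicalPair p q e y t := by
  have hex := exists_iterate_eq_of_mem_range gc hsy hk
  classical
  obtain ⟨n, hn, hmin⟩ :
      ∃ n, (p^[n] y = p^[n + 1] (q y) ∨ p^[n + 1] s = p^[n + 1] y) ∧
        ∀ j < n, p^[j] y ≠ p^[j + 1] (q y) ∧ p^[j + 1] s ≠ p^[j + 1] y :=
    ⟨Nat.find hex, Nat.find_spec hex, fun j hj => not_or.1 (Nat.find_min hex hj)⟩
  have mono (j : ℕ) := (galoisConnection_iterate gc j).monotone_u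
  have hlt : p^[n] s < p^[n] y := by
    cases n with
    | zero => exact hsy.lt
    | succ j => exact (mono _ hsy.le).lt_of_ne (hmin j j.lt_succ_self).2
  have hqp := iterate_l_iterate_u_eq_of_covBy gc hsy hlt
  have hle (j : ℕ) : p^[j] y ≤ p^[j + 1] (q y) := mono j (gc.le_u_l y)
  by_cases heven : p^[n] y = p^[n + 1] (q y)
  · refine ⟨2 * n, _, .even n y _ rfl ?_ ?_⟩
    · rwa [← Function.iterate_succ_apply' p, ← heven]
    · rintro j rfl
      exact (hle j).lt_of_ne (hmin j j.lt_succ_self).1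
  · refine ⟨2 * n + 1, _, .odd n y _ rfl hqp ?_ ((hle n).lt_of_ne heven)⟩
    rw [← Function.iterate_succ_apply' p, ← hn.resolve_left heven]
    exact ((galoisConnection_iterate gc _).l_u_le s).trans_lt hsy.lt

end Order

theorem exists_range_iterate_eq {n : ℤ} (hn : n ≠ 0) (f : AddConstMap ℤ ℤ n n) :
    ∃ k : ℕ, Set.range f^[k] ⊆ Set.range f^[k + 1] := by
  have : NeZero n.natAbs := ⟨Int.natAbs_ne_zero.2 hn⟩
  let residues (k : ℕ) : Set (ZMod n.natAbs) := Set.range fun x => (f^[k] x : ZMod n.natAbs)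
  by_contra! hstrict
  refine not_strictAnti_of_wellFoundedLT residues (strictAnti_nat_of_succ_lt fun k => ⟨?_, ?_⟩)
  · rintro _ ⟨x, rfl⟩
    exact ⟨f x, rfl⟩
  · intro hsub
    obtain ⟨_, ⟨y, rfl⟩, hy⟩ := Set.not_subset.1 (hstrict k)
    obtain ⟨x, hx⟩ := hsub ⟨y, rfl⟩
    obtain ⟨m, hm⟩ := Int.natAbs_dvd.1 ((ZMod.intCast_eq_intCast_iff_dvd_sub _ _ _).1 hx)
    refine hy ⟨x + m • n, ?_⟩
    have := AddConstMapClass.map_add_zsmul (f ^ (k + 1)) x m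
    simp only [AddConstMap.coe_pow] at this
    rw [this, smul_eq_mul, mul_comm, ← hm, add_sub_cancel]

section Uniserial

/-- Unbundled form of `ArtinAlg.IsUniserial`. -/
def Uniserial (A M : Type*) [Ring A] [AddCommGroup M] [Module A M] : Prop :=
  ∀ N₁ N₂ : Submodule A M, N₁ ≤ N₂ ∨ N₂ ≤ N₁

variable {A M N S T : Type*} [Ring A] [AddCommGroup M] [Module A M] [AddCommGroup N] [Module A N]
  [AddCommGroup S] [Module A S] [AddCommGroup T] [Module A T]

theorem isCoatom_ker_of_surjective [IsSimpleModule A S] {f : M →ₗ[A] S}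
    (hf : Function.Surjective f) : IsCoatom (LinearMap.ker f) :=
  isSimpleModule_iff_isCoatom.1 (.congr (f.quotKerEquivOfSurjective hf))

theorem isAtom_range_of_injective [IsSimpleModule A S] {f : S →ₗ[A] M}
    (hf : Function.Injective f) : IsAtom (LinearMap.range f) :=
  isSimpleModule_iff_isAtom.1 (.congr (LinearEquiv.ofInjective f hf).symm)

namespace Uniserial

theorem of_injective (h : Uniserial A M) {f : N →ₗ[A] M} (hf : Function.Injective f) :
    Uniserial A N := fun N₁ N₂ =>
  (h (N₁.map f) (N₂.map f)).imp (Submodule.map_le_map_iff_of_injective hf _ _).1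
    (Submodule.map_le_map_iff_of_injective hf _ _).1

theorem of_surjective (h : Uniserial A M) {f : M →ₗ[A] N} (hf : Function.Surjective f) :
    Uniserial A N := fun N₁ N₂ =>
  (h (N₁.comap f) (N₂.comap f)).imp (Submodule.comap_le_comap_iff_of_surjective hf).1
    (Submodule.comap_le_comap_iff_of_surjective hf).1

theorem of_forall_fg (h : ∀ L : Submodule A M, L.FG → Uniserial A L) : Uniserial A M := by
  intro N₁ N₂
  by_contra! ⟨h₁, h₂⟩
  obtain ⟨x, hx₁, hx₂⟩ := SetLike.not_le_iff_exists.1 h₁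
  obtain ⟨y, hy₂, hy₁⟩ := SetLike.not_le_iff_exists.1 h₂
  let L := Submodule.span A {x, y}
  have hx : x ∈ L := Submodule.subset_span (by simp)
  have hy : y ∈ L := Submodule.subset_span (by simp)
  rcases h L (Submodule.fg_span (Set.toFinite _)) (N₁.comap L.subtype) (N₂.comap L.subtype)
    with hle | hle
  · exact hx₂ (hle (show (⟨x, hx⟩ : L) ∈ N₁.comap L.subtype from hx₁))
  · exact hy₁ (hle (show (⟨y, hy⟩ : L) ∈ N₂.comap L.subtype from hy₂))

theorem surjective_of_comp [Nontrivial S] (h : Uniserial A M) {f : M →ₗ[A] S} {g : N →ₗ[A] M}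
    (hfg : Function.Surjective (f ∘ₗ g)) : Function.Surjective g := by
  rcases h (LinearMap.range g) (LinearMap.ker f) with hle | hle
  · obtain ⟨s, hs⟩ := exists_ne (0 : S)
    obtain ⟨x, hx⟩ := hfg s
    exact absurd (hx.symm.trans (hle ⟨x, rfl⟩)) hs
  · intro m
    obtain ⟨x, hx⟩ := hfg (f m)
    obtain ⟨x', hx'⟩ := hle (show m - g x ∈ LinearMap.ker f by simpa [sub_eq_zero] using hx.symm)
    exact ⟨x' + x, by rw [map_add, hx', sub_add_cancel]⟩

theorem injective_of_comp [Nontrivial S] (h : Uniserial A M) {f : S →ₗ[A] M} {g : M →ₗ[A] N}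
    (hgf : Function.Injective (g ∘ₗ f)) : Function.Injective g := by
  rcases h (LinearMap.range f) (LinearMap.ker g) with hle | hle
  · obtain ⟨s, hs⟩ := exists_ne (0 : S)
    exact absurd (hgf (by simpa using hle ⟨s, rfl⟩)) hs
  · refine (injective_iff_map_eq_zero g).2 fun m hm => ?_
    obtain ⟨s, rfl⟩ := hle hm
    rw [hgf (hm.trans (map_zero (g ∘ₗ f)).symm), map_zero]

theorem ker_eq_ker [IsSimpleModule A S] [IsSimpleModule A T] (h : Uniserial A M) {f : M →ₗ[A] S}
    (hf : Function.Surjective f) {g : M →ₗ[A] T} (hg : Function.Surjective g) :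
    LinearMap.ker f = LinearMap.ker g := by
  have hf' := isCoatom_ker_of_surjective hf
  have hg' := isCoatom_ker_of_surjective hg
  exact (h (LinearMap.ker f) (LinearMap.ker g)).elim (fun hle => ((hf'.le_iff_eq hg'.1).1 hle).symm)
    (hg'.le_iff_eq hf'.1).1

theorem top_unique [IsSimpleModule A S] [IsSimpleModule A T] (h : Uniserial A M) {f : M →ₗ[A] S}
    (hf : Function.Surjective f) {g : M →ₗ[A] T} (hg : Function.Surjective g) :
    Nonempty (S ≃ₗ[A] T) :=
  ⟨(f.quotKerEquivOfSurjective hf).symm ≪≫ₗ Submodule.quotEquivOfEq _ _ (h.ker_eq_ker hf hg) ≪≫ₗ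
    g.quotKerEquivOfSurjective hg⟩

theorem soc_unique [IsSimpleModule A S] [IsSimpleModule A T] (h : Uniserial A M) {f : S →ₗ[A] M}
    (hf : Function.Injective f) {g : T →ₗ[A] M} (hg : Function.Injective g) :
    Nonempty (S ≃ₗ[A] T) := by
  have hf' := isAtom_range_of_injective hf
  have hg' := isAtom_range_of_injective hg
  have hrange : LinearMap.range f = LinearMap.range g :=
    (h (LinearMap.range f) (LinearMap.range g)).elim (hg'.le_iff_eq hf'.1).1
      (fun hle => ((hf'.le_iff_eq hg'.1).1 hle).symm)
  exact ⟨LinearEquiv.ofInjective f hf ≪≫ₗ LinearEquiv.ofEq _ _ hrange ≪≫ₗ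
    (LinearEquiv.ofInjective g hg).symm⟩

theorem length_ne_top [IsArtinianRing A] (h : Uniserial A M) : Module.length A M ≠ ⊤ := by
  have hproper (L : Submodule A M) (hL : L < ⊤) : Module.length A L ≤ Module.length A A := by
    obtain ⟨x, -, hx⟩ := SetLike.exists_of_lt hL
    have hle : L ≤ Submodule.span A {x} := (h _ _).resolve_right fun hle =>
      hx (hle (Submodule.mem_span_singleton_self x))
    calc Module.length A L
        ≤ Module.length A (Submodule.span A {x}) :=
          Module.length_le_of_injective _ (Submodule.inclusion_injective hle)
      _ ≤ Module.length A A := by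
          rw [← LinearMap.range_toSpanSingleton]
          exact Module.length_le_of_surjective _ (LinearMap.surjective_rangeRestrict _)
  obtain ⟨n, hn⟩ := ENat.ne_top_iff_exists.1 (Module.length_ne_top (R := A) (M := A))
  refine ne_top_of_le_ne_top (ENat.natCast_ne_top (n + 1)) ?_
  rw [Module.length_eq_height, Order.height_le_coe_iff]
  intro L hL
  rw [← Module.length_submodule]
  exact (hproper L hL).trans_lt (hn ▸ by exact_mod_cast n.lt_succ_self)

end Uniserial

end Uniserial

section Existence

variable {A : Type} [Ring A]

theorem uniserial_of_indecomposable (hA : ArtinAlg.IsNakayama A) {M : Type} [AddCommGroup M]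
    [Module A M] [Module.Finite A M]
    (h : ∀ N₁ N₂ : Submodule A M, IsCompl N₁ N₂ → N₁ = ⊥ ∨ N₂ = ⊥) : Uniserial A M := by
  rcases subsingleton_or_nontrivial M with _ | _
  · exact fun N₁ N₂ => .inl (Subsingleton.elim N₁ N₂).le
  · exact hA (ModuleCat.of A M) ‹_› ⟨‹_›, h⟩

section ProjectiveCover

variable {M T : Type*} [AddCommGroup M] [Module A M] [AddCommGroup T] [Module A T]

theorem projective_of_isCompl [Module.Projective A M] {N₁ N₂ : Submodule A M}
    (h : IsCompl N₁ N₂) : Module.Projective A N₁ :=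
  .of_split N₁.subtype (N₁.projectionOnto N₂ h) (by ext; simp)

theorem exists_domRestrict_ne_zero_of_isCompl {f : M →ₗ[A] T} (hf : f ≠ 0) {N₁ N₂ : Submodule A M}
    (h : IsCompl N₁ N₂) : f.domRestrict N₁ ≠ 0 ∨ f.domRestrict N₂ ≠ 0 := by
  by_contra! ⟨h₁, h₂⟩
  refine hf (LinearMap.ker_eq_top.1 (top_le_iff.1 (h.sup_eq_top ▸ sup_le ?_ ?_)))
  · exact fun x hx => LinearMap.congr_fun h₁ ⟨x, hx⟩
  · exact fun x hx => LinearMap.congr_fun h₂ ⟨x, hx⟩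

end ProjectiveCover

theorem exists_projective_uniserial_surjective [IsArtinianRing A] (hA : ArtinAlg.IsNakayama A)
    (T : Type) [AddCommGroup T] [Module A T] [IsSimpleModule A T] :
    ∃ (P : Submodule A A) (f : P →ₗ[A] T), Module.Projective A P ∧ Uniserial A P ∧
      Function.Surjective f := by
  have hne : ∃ P : Submodule A A, Module.Projective A P ∧ ∃ f : P →ₗ[A] T, f ≠ 0 := by
    have := IsSimpleModule.nontrivial A T
    obtain ⟨t, ht⟩ := exists_ne (0 : T)
    refine ⟨⊤, .of_equiv Submodule.topEquiv.symm,
      LinearMap.toSpanSingleton A T t ∘ₗ Submodule.subtype ⊤, fun h => ht ?_⟩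
    simpa using LinearMap.congr_fun h ⟨1, trivial⟩
  obtain ⟨P, ⟨hP, f, hf⟩, hmin⟩ := exists_minimal_of_wellFoundedLT _ hne
  refine ⟨P, f, hP, uniserial_of_indecomposable hA ?_, LinearMap.surjective_of_ne_zero hf⟩
  have eq_bot {N₁ N₂ : Submodule A P} (h : IsCompl N₁ N₂) (hf : f.domRestrict N₁ ≠ 0) :
      N₂ = ⊥ := by
    let e := N₁.equivMapOfInjective P.subtype P.injective_subtype
    have := projective_of_isCompl h
    have hle := hmin ⟨.of_equiv e, f.domRestrict N₁ ∘ₗ e.symm.toLinearMap, fun h0 => hf ?_⟩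
      (Submodule.map_subtype_le P N₁)
    · have hN₁ : N₁ = ⊤ := top_le_iff.1 fun x _ => by simpa using hle x.2
      exact eq_bot_of_isCompl_top (hN₁ ▸ h).symm
    · ext x
      simpa using LinearMap.congr_fun h0 (e x)
  intro N₁ N₂ h
  rcases exists_domRestrict_ne_zero_of_isCompl hf h with hf | hf
  · exact .inr (eq_bot h hf)
  · exact .inl (eq_bot h.symm hf)

section InjectiveHull

theorem exists_quotient_forall_mem {M : Type*} [AddCommGroup M] [Module A M] {x : M} (hx : x ≠ 0) :
    ∃ C : Submodule A M, x ∉ C ∧ ∀ D : Submodule A (M ⧸ C), D ≠ ⊥ → C.mkQ x ∈ D := by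
  obtain ⟨C, -, hC⟩ := zorn_le_nonempty₀ {C : Submodule A M | x ∉ C} (fun c hc hchain C hCc => by
    refine ⟨sSup c, fun hmem => ?_, fun D hD => le_sSup hD⟩
    rw [Submodule.mem_sSup_of_directed ⟨C, hCc⟩ hchain.directedOn] at hmem
    obtain ⟨D, hD, hxD⟩ := hmem
    exact hc hD hxD) ⊥ (by simpa)
  refine ⟨C, hC.prop, fun D hD => ?_⟩
  by_contra hxD
  have hle : D.comap C.mkQ ≤ C := hC.2 hxD (Submodule.le_comap_mkQ C D)
  refine hD ((Submodule.eq_bot_iff D).2 fun d hd => ?_)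
  obtain ⟨d, rfl⟩ := C.mkQ_surjective d
  simpa using hle hd

theorem uniserial_of_forall_mem (hA : ArtinAlg.IsNakayama A) {M : Type} [AddCommGroup M]
    [Module A M] {x : M} (hx : x ≠ 0) (h : ∀ D : Submodule A M, D ≠ ⊥ → x ∈ D) :
    Uniserial A M := by
  refine .of_forall_fg fun L hL => ?_
  have : Module.Finite A L := Module.Finite.iff_fg.2 hL
  have mem_map {N : Submodule A L} (hN : N ≠ ⊥) : x ∈ N.map L.subtype :=
    h _ fun h0 => hN (Submodule.map_injective_of_injective L.injective_subtype (by
      rw [h0, Submodule.map_bot]))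
  refine uniserial_of_indecomposable hA fun N₁ N₂ hN => ?_
  by_contra! ⟨h₁, h₂⟩
  have hmem := Submodule.mem_inf.2 ⟨mem_map h₁, mem_map h₂⟩
  rw [← Submodule.map_inf _ L.injective_subtype, hN.inf_eq_bot, Submodule.map_bot] at hmem
  exact hx ((Submodule.mem_bot A).1 hmem)

theorem injective_of_retract {M N : Type} [AddCommGroup M] [Module A M] [AddCommGroup N]
    [Module A N] (hM : Module.Injective A M) {i : N →ₗ[A] M} {r : M →ₗ[A] N}
    (h : r ∘ₗ i = LinearMap.id) : Module.Injective A N where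
  out _ _ _ _ _ _ f hf g := by
    obtain ⟨g', hg'⟩ := hM.out f hf (i ∘ₗ g)
    exact ⟨r ∘ₗ g', fun x => by simpa [hg'] using LinearMap.congr_fun h (g x)⟩

theorem exists_injective_uniserial_injective [IsArtinianRing A] (hA : ArtinAlg.IsNakayama A)
    (S : Type) [AddCommGroup S] [Module A S] [IsSimpleModule A S] :
    ∃ (I : ModuleCat.{0} A) (i : S →ₗ[A] I), Module.Injective A I ∧ Uniserial A I ∧
      Function.Injective i := by
  let J := Injective.under (ModuleCat.of A S)
  have hJ : Module.Injective A J :=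
    Module.injective_module_of_injective_object (R := A) (M := J)
      (inj := inferInstanceAs (Injective (Injective.under (ModuleCat.of A S))))
  let j : S →ₗ[A] J := (Injective.ι (ModuleCat.of A S)).hom
  have hj : Function.Injective j := (ModuleCat.mono_iff_injective _).1 inferInstance
  have := IsSimpleModule.nontrivial A S
  obtain ⟨s, hs⟩ := exists_ne (0 : S)
  obtain ⟨C, hsC, hC⟩ := exists_quotient_forall_mem (A := A) ((map_ne_zero_iff j hj).2 hs)
  have hsC' : C.mkQ (j s) ≠ 0 := mt (Submodule.Quotient.mk_eq_zero C).1 hsC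
  have hU := uniserial_of_forall_mem hA hsC' hC
  let i : S →ₗ[A] J ⧸ C := C.mkQ ∘ₗ j
  have hi : Function.Injective i :=
    LinearMap.injective_of_ne_zero fun h => hsC' (LinearMap.congr_fun h s)
  refine ⟨ModuleCat.of A (J ⧸ C), i, ?_, hU, hi⟩
  -- The extension `φ` of `j` along `i` embeds `J ⧸ C` as a direct summand of `J`.
  obtain ⟨φ, hφ⟩ := hJ.out i hi j
  have hinj : Function.Injective (C.mkQ ∘ₗ φ) := hU.injective_of_comp (f := i) <| by
    rwa [LinearMap.comp_assoc, show φ ∘ₗ i = j from LinearMap.ext hφ]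
  have := (isFiniteLength_iff_isNoetherian_isArtinian.1
    (Module.length_ne_top_iff.1 hU.length_ne_top)).2
  let e := LinearEquiv.ofBijective _ (IsArtinian.bijective_of_injective_endomorphism _ hinj)
  exact injective_of_retract hJ (i := φ) (r := e.symm.toLinearMap ∘ₗ C.mkQ)
    (LinearMap.ext e.symm_apply_apply)

end InjectiveHull

theorem exists_finite_simples (A : Type) [Ring A] [IsArtinianRing A] :
    ∃ (K : Type) (_ : Finite K) (S : K → Submodule A (A ⧸ Module.jacobson A A)),
      (∀ k, IsSimpleModule A (S k)) ∧ (∀ k l, Nonempty (S k ≃ₗ[A] S l) → k = l) ∧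
      ∀ (T : Type) [AddCommGroup T] [Module A T] [IsSimpleModule A T],
        ∃ k, Nonempty (T ≃ₗ[A] S k) := by
  let B := A ⧸ Module.jacobson A A
  have : IsSemisimpleModule A B :=
    (IsArtinian.isSemisimpleModule_iff_jacobson A B).2 (Module.jacobson_quotient_jacobson A A)
  choose S simple hS using fun k : isotypicComponents A B => k.2
  refine ⟨isotypicComponents A B, inferInstance, S, simple, fun k l ⟨e⟩ => ?_, fun T _ _ _ => ?_⟩
  · rw [Subtype.ext_iff, hS k, hS l, e.isotypicComponent_eq]
  · obtain ⟨m, hm, ⟨e⟩⟩ := isSimpleModule_iff_quot_maximal.1 ‹IsSimpleModule A T›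
    let π : B →ₗ[A] A ⧸ m := Submodule.factor (sInf_le hm.1)
    obtain ⟨i, hi⟩ := IsSemisimpleModule.lifting_property π (Submodule.factor_surjective _)
      e.toLinearMap
    have hinj : Function.Injective i := .of_comp (f := π) <| by
      rw [← LinearMap.coe_comp, hi]
      exact e.injective
    let e' := LinearEquiv.ofInjective i hinj
    have := IsSimpleModule.congr e'.symm
    let k : isotypicComponents A B := ⟨isotypicComponent A B (LinearMap.range i), _, this, rfl⟩
    obtain ⟨e''⟩ := isIsotypicOfType_submodule_iff.1
      (IsIsotypicOfType.isotypicComponent A B (LinearMap.range i)) (S k)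
      ((S k).le_isotypicComponent.trans (hS k).ge)
    exact ⟨k, ⟨e' ≪≫ₗ e''.symm⟩⟩

/-- A finite complete system of simple modules `S k` with projective covers `P k` and injective
hulls `I k`, all of which are uniserial. -/
structure SimpleSystem (A : Type) [Ring A] where
  K : Type
  finite : Finite K
  S : K → ModuleCat.{0} A
  P : K → ModuleCat.{0} A
  I : K → ModuleCat.{0} A
  cover (k : K) : P k →ₗ[A] S k
  hull (k : K) : S k →ₗ[A] I k
  simple (k : K) : IsSimpleModule A (S k)
  projective (k : K) : Module.Projective A (P k)
  injective (k : K) : Module.Injective A (I k)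
  uniserial_P (k : K) : Uniserial A (P k)
  uniserial_I (k : K) : Uniserial A (I k)
  length_P (k : K) : Module.length A (P k) ≠ ⊤
  length_I (k : K) : Module.length A (I k) ≠ ⊤
  cover_surjective (k : K) : Function.Surjective (cover k)
  hull_injective (k : K) : Function.Injective (hull k)
  eq_of_equiv (k l : K) : Nonempty (S k ≃ₗ[A] S l) → k = l
  exists_equiv (T : Type) [AddCommGroup T] [Module A T] [IsSimpleModule A T] :
    ∃ k, Nonempty (T ≃ₗ[A] S k)

theorem nonempty_simpleSystem [IsArtinianRing A] (hA : ArtinAlg.IsNakayama A) :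
    Nonempty (SimpleSystem A) := by
  obtain ⟨K, finite, S, simple, eq_of_equiv, exists_equiv⟩ := exists_finite_simples A
  choose P cover projective uniserial_P cover_surjective using fun k =>
    exists_projective_uniserial_surjective hA (S k)
  choose I hull injective uniserial_I hull_injective using fun k =>
    exists_injective_uniserial_injective hA (S k)
  exact ⟨{
    K, finite, I, cover, hull, simple, projective, injective, uniserial_P, uniserial_I,
    cover_surjective, hull_injective, eq_of_equiv, exists_equiv
    S := fun k => ModuleCat.of A (S k)
    P := fun k => ModuleCat.of A (P k)
    length_P := fun k => (uniserial_P k).length_ne_top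
    length_I := fun k => (uniserial_I k).length_ne_top }⟩

end Existence

namespace SimpleSystem

variable {A M : Type} [Ring A] [AddCommGroup M] [Module A M] (D : SimpleSystem A)

instance (k : D.K) : IsSimpleModule A (D.S k) := D.simple k

instance (k : D.K) : Nontrivial (D.S k) := IsSimpleModule.nontrivial A _

theorem exists_lift {k : D.K} (hM : Uniserial A M) {f : M →ₗ[A] D.S k}
    (hf : Function.Surjective f) :
    ∃ h : D.P k →ₗ[A] M, Function.Surjective h ∧ f ∘ₗ h = D.cover k := by
  have := D.projective k
  obtain ⟨h, hh⟩ := Module.projective_lifting_property f (D.cover k) hf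
  exact ⟨h, hM.surjective_of_comp (hh ▸ D.cover_surjective k), hh⟩

theorem exists_extension {k : D.K} (hM : Uniserial A M) {f : D.S k →ₗ[A] M}
    (hf : Function.Injective f) :
    ∃ h : M →ₗ[A] D.I k, Function.Injective h ∧ h ∘ₗ f = D.hull k := by
  obtain ⟨h, hh⟩ := (D.injective k).out f hf (D.hull k)
  have hhf : h ∘ₗ f = D.hull k := LinearMap.ext hh
  exact ⟨h, hM.injective_of_comp (hhf ▸ D.hull_injective k), hhf⟩

end SimpleSystem

theorem exists_perm_of_biUnique {α : Type*} [Finite α] {r : α → α → Prop}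
    (hr : Relator.BiUnique r) : ∃ π : Equiv.Perm α, ∀ a b, r a b → π a = b := by
  classical
  choose f hf using fun a : {a // ∃ b, r a b} => a.2
  have hinj : Function.Injective f := fun a b hab => Subtype.ext (hr.1 (hf a) (hab ▸ hf b))
  refine ⟨(Equiv.ofInjective f hinj).extendSubtype, fun a b hab => ?_⟩
  rw [Equiv.extendSubtype_apply_of_mem _ a ⟨b, hab⟩]
  exact hr.2 (hf ⟨a, b, hab⟩) hab

namespace SimpleSystem

variable {A M : Type} [Ring A] [AddCommGroup M] [Module A M] (D : SimpleSystem A)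

/-- There is an arrow `k ⟶ l` in the quiver of `A`: the simple module `S l` is the top of the
radical `ker (P k ⟶ S k)`. -/
def Arrow (k l : D.K) : Prop :=
  ∃ g : LinearMap.ker (D.cover k) →ₗ[A] D.S l, Function.Surjective g

theorem arrow_of_surjective {k l : D.K} (hM : Uniserial A M) {f : M →ₗ[A] D.S k}
    (hf : Function.Surjective f) {g : LinearMap.ker f →ₗ[A] D.S l} (hg : Function.Surjective g) :
    D.Arrow k l := by
  obtain ⟨h, hh, hfh⟩ := D.exists_lift hM hf
  have hmem (x : LinearMap.ker (D.cover k)) : h x ∈ LinearMap.ker f :=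
    (LinearMap.congr_fun hfh x).trans x.2
  refine ⟨g ∘ₗ (h.domRestrict _).codRestrict (LinearMap.ker f) hmem, hg.comp fun m => ?_⟩
  obtain ⟨x, hx⟩ := hh m
  have hxk : D.cover k x = 0 := by rw [← hfh, LinearMap.comp_apply, hx, m.2]
  exact ⟨⟨x, hxk⟩, Subtype.ext hx⟩

theorem arrow_rightUnique : Relator.RightUnique D.Arrow := fun k l l' ⟨_, hg⟩ ⟨_, hg'⟩ =>
  D.eq_of_equiv l l' (((D.uniserial_P k).of_injective
    (LinearMap.ker (D.cover k)).injective_subtype).top_unique hg hg')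

theorem exists_apply_notMem_range_hull {k l : D.K} {φ : D.P k →ₗ[A] D.I l}
    {g : LinearMap.ker (D.cover k) →ₗ[A] D.S l} (hg : Function.Surjective g)
    (hφ : ∀ x, φ x.1 = D.hull l (g x)) : ∃ x, φ x ∉ LinearMap.range (D.hull l) := by
  by_contra! hmem
  let ψ := (LinearEquiv.ofInjective (D.hull l) (D.hull_injective l)).symm.toLinearMap ∘ₗ
    φ.codRestrict _ hmem
  have hψ (x : LinearMap.ker (D.cover k)) : ψ x = g x :=
    (LinearEquiv.symm_apply_eq _).2 (Subtype.ext (hφ x))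
  have hker := (D.uniserial_P k).ker_eq_ker (D.cover_surjective k) (g := ψ)
    fun s => (hg s).elim fun x hx => ⟨x, (hψ x).trans hx⟩
  obtain ⟨s, hs⟩ := exists_ne (0 : D.S l)
  obtain ⟨x, rfl⟩ := hg s
  exact hs ((hψ x).symm.trans (hker.le x.2))

theorem exists_injective_quotient_hull {k l : D.K} (h : D.Arrow k l) :
    ∃ f : D.S k →ₗ[A] D.I l ⧸ LinearMap.range (D.hull l), Function.Injective f := by
  obtain ⟨g, hg⟩ := h
  obtain ⟨φ, hφ⟩ := (D.injective l).out _ (LinearMap.ker (D.cover k)).injective_subtype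
    (D.hull l ∘ₗ g)
  obtain ⟨x, hx⟩ := D.exists_apply_notMem_range_hull hg hφ
  let q := (LinearMap.range (D.hull l)).mkQ ∘ₗ φ
  have hle : LinearMap.ker (D.cover k) ≤ LinearMap.ker q := fun y hy =>
    (Submodule.Quotient.mk_eq_zero _).2 ⟨g ⟨y, hy⟩, (hφ ⟨y, hy⟩).symm⟩
  have hne : LinearMap.ker q ≠ ⊤ := fun htop =>
    hx ((Submodule.Quotient.mk_eq_zero _).1 (htop.ge (Submodule.mem_top (x := x))))
  have hker : LinearMap.ker q = LinearMap.ker (D.cover k) :=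
    ((isCoatom_ker_of_surjective (D.cover_surjective k)).le_iff_eq hne).1 hle
  exact ⟨(LinearMap.ker (D.cover k)).liftQ q hle ∘ₗ
      ((D.cover k).quotKerEquivOfSurjective (D.cover_surjective k)).symm.toLinearMap,
    (LinearMap.ker_eq_bot.1 (Submodule.ker_liftQ_eq_bot _ q hle hker.le)).comp
      (LinearEquiv.injective _)⟩

theorem arrow_leftUnique : Relator.LeftUnique D.Arrow := fun k k' l h h' => by
  obtain ⟨f, hf⟩ := D.exists_injective_quotient_hull h
  obtain ⟨f', hf'⟩ := D.exists_injective_quotient_hull h'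
  exact D.eq_of_equiv k k'
    (((D.uniserial_I l).of_surjective (Submodule.mkQ_surjective _)).soc_unique hf hf')

theorem exists_perm_arrow : ∃ π : Equiv.Perm D.K, ∀ k l, D.Arrow k l → π k = l :=
  have := D.finite
  exists_perm_of_biUnique ⟨D.arrow_leftUnique, D.arrow_rightUnique⟩

end SimpleSystem

namespace SimpleSystem

section Coordinates

variable {A M : Type} [Ring A] [AddCommGroup M] [Module A M] (D : SimpleSystem A)

theorem exists_surjective [Nontrivial M] [IsNoetherian A M] :
    ∃ (k : D.K) (f : M →ₗ[A] D.S k), Function.Surjective f := by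
  obtain ⟨L, hL, -⟩ := (eq_top_or_exists_le_coatom (⊥ : Submodule A M)).resolve_left bot_ne_top
  have := isSimpleModule_iff_isCoatom.2 hL
  obtain ⟨k, ⟨e⟩⟩ := D.exists_equiv (M ⧸ L)
  exact ⟨k, e.toLinearMap ∘ₗ L.mkQ, e.surjective.comp L.mkQ_surjective⟩

/-- A permutation of the simple modules extending the quiver of `A`. -/
def next : Equiv.Perm D.K := D.exists_perm_arrow.choose

theorem next_eq_of_arrow {k l : D.K} (h : D.Arrow k l) : D.next k = l :=
  D.exists_perm_arrow.choose_spec k l h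

/-- The bi-infinite walk through the simple modules along `next`, starting at `k₀`. It labels the
integers by simple modules. -/
def coord (k₀ : D.K) (x : ℤ) : D.K := (D.next ^ x) k₀

theorem coord_add_one (k₀ : D.K) (x : ℤ) : D.coord k₀ (x + 1) = D.next (D.coord k₀ x) := by
  simp only [coord, add_comm x 1, zpow_one_add, Equiv.Perm.mul_apply]

theorem coord_coord (k₀ : D.K) (x y : ℤ) : D.coord (D.coord k₀ x) y = D.coord k₀ (y + x) := by
  simp only [coord, zpow_add, Equiv.Perm.mul_apply]

theorem exists_coord_periodic (k₀ : D.K) : ∃ n : ℤ, n ≠ 0 ∧ Function.Periodic (D.coord k₀) n := by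
  have := D.finite
  refine ⟨orderOf D.next, by exact_mod_cast (orderOf_pos D.next).ne', fun x => ?_⟩
  simp only [coord, zpow_add, zpow_natCast, pow_orderOf_eq_one, mul_one]

end Coordinates

/-- `M` is uniserial with composition factors `S (coord k₀ i)`, `x ≤ i < y`, from top to socle.
Only the top and the length are recorded, as the quiver of `A` determines the other factors. -/
structure IsInterval {A : Type} [Ring A] (D : SimpleSystem A) (k₀ : D.K) (M : Type)
    [AddCommGroup M] [Module A M] (x y : ℤ) : Prop where
  uniserial : Uniserial A M
  le : x ≤ y
  length_eq : Module.length A M = (y - x).toNat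
  exists_top : x < y → ∃ f : M →ₗ[A] D.S (D.coord k₀ x), Function.Surjective f

namespace IsInterval

variable {A M N Q T : Type} [Ring A] [AddCommGroup M] [Module A M] [AddCommGroup N] [Module A N]
  [AddCommGroup Q] [Module A Q] [AddCommGroup T] [Module A T] {D : SimpleSystem A} {k₀ : D.K}
  {x y z : ℤ}

theorem congr (h : D.IsInterval k₀ M x y) (e : M ≃ₗ[A] N) : D.IsInterval k₀ N x y where
  uniserial := h.uniserial.of_surjective (f := e.toLinearMap) e.surjective
  le := h.le
  length_eq := e.length_eq ▸ h.length_eq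
  exists_top hxy := (h.exists_top hxy).imp' (· ∘ₗ e.symm.toLinearMap)
    fun _ hf => hf.comp e.symm.surjective

theorem of_top (hM : Uniserial A M) (hlen : Module.length A M ≠ ⊤)
    {f : M →ₗ[A] D.S (D.coord k₀ x)} (hf : Function.Surjective f) :
    D.IsInterval k₀ M x (x + (Module.length A M).toNat) where
  uniserial := hM
  le := by omega
  length_eq := by simp [ENat.natCast_toNat hlen]
  exists_top _ := ⟨f, hf⟩

theorem of_subsingleton [Subsingleton M] : D.IsInterval k₀ M x x where
  uniserial N₁ N₂ := .inl (Subsingleton.elim N₁ N₂).le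
  le := le_rfl
  length_eq := by simp [Module.length_eq_zero]
  exists_top hxx := absurd hxx (lt_irrefl x)

theorem sub_eq_sub {x' y' : ℤ} (h : D.IsInterval k₀ M x y) (h' : D.IsInterval k₀ M x' y') :
    y - x = y' - x' := by
  have hlen : (y - x).toNat = (y' - x').toNat := by
    exact_mod_cast h.length_eq.symm.trans h'.length_eq
  have := h.le
  have := h'.le
  omega

theorem left_eq {x' : ℤ} (h : D.IsInterval k₀ M x y) (h' : D.IsInterval k₀ M x' y) : x = x' := by
  have := h.sub_eq_sub h'
  omega

theorem right_eq {y' : ℤ} (h : D.IsInterval k₀ M x y) (h' : D.IsInterval k₀ M x y') : y = y' := by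
  have := h.sub_eq_sub h'
  omega

theorem isFiniteLength (h : D.IsInterval k₀ M x y) : IsFiniteLength A M := by
  rw [← Module.length_ne_top_iff, h.length_eq]
  exact ENat.natCast_ne_top _

theorem isNoetherian (h : D.IsInterval k₀ M x y) : IsNoetherian A M :=
  (isFiniteLength_iff_isNoetherian_isArtinian.1 h.isFiniteLength).1

theorem isArtinian (h : D.IsInterval k₀ M x y) : IsArtinian A M :=
  (isFiniteLength_iff_isNoetherian_isArtinian.1 h.isFiniteLength).2

theorem nontrivial_iff (h : D.IsInterval k₀ M x y) : Nontrivial M ↔ x < y := by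
  rw [← Module.length_pos_iff (R := A), h.length_eq, Nat.cast_pos, Int.lt_toNat]
  omega

theorem top_unique [IsSimpleModule A T] (h : D.IsInterval k₀ M x y) {f : M →ₗ[A] T}
    (hf : Function.Surjective f) : Nonempty (T ≃ₗ[A] D.S (D.coord k₀ x)) := by
  have := IsSimpleModule.nontrivial A T
  obtain ⟨g, hg⟩ := h.exists_top (h.nontrivial_iff.1 hf.nontrivial)
  exact h.uniserial.top_unique hf hg

theorem ker (h : D.IsInterval k₀ M x y) {f : M →ₗ[A] D.S (D.coord k₀ x)}
    (hf : Function.Surjective f) : D.IsInterval k₀ (LinearMap.ker f) (x + 1) y := by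
  have hxy : x < y := h.nontrivial_iff.1 hf.nontrivial
  have hlen : Module.length A (LinearMap.ker f) = (y - (x + 1)).toNat := by
    have hadd := Module.length_eq_add_of_exact _ f (LinearMap.ker f).injective_subtype hf
      (LinearMap.exact_subtype_ker_map f)
    rw [h.length_eq, Module.length_eq_one A (D.S _),
      show (y - x).toNat = (y - (x + 1)).toNat + 1 by omega, Nat.cast_add, Nat.cast_one] at hadd
    exact ((ENat.addLECancellable_of_ne_top ENat.one_ne_top).inj_left.1 hadd).symm
  refine ⟨h.uniserial.of_injective (LinearMap.ker f).injective_subtype, hxy, hlen, fun hlt => ?_⟩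
  have : Nontrivial (LinearMap.ker f) := by
    rw [← Module.length_pos_iff (R := A), hlen, Nat.cast_pos, Int.lt_toNat]
    omega
  have := h.isNoetherian
  obtain ⟨l, g, hg⟩ := D.exists_surjective (M := LinearMap.ker f)
  obtain rfl : D.coord k₀ (x + 1) = l := by
    rw [coord_add_one, D.next_eq_of_arrow (D.arrow_of_surjective h.uniserial hf hg)]
  exact ⟨g, hg⟩

theorem exists_of_injective (h : D.IsInterval k₀ M x y) {j : N →ₗ[A] M}
    (hj : Function.Injective j) : ∃ z, D.IsInterval k₀ N z y := by
  induction hn : (y - x).toNat generalizing M x with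
  | zero =>
    have hM : ¬ Nontrivial M := fun hM => by have := h.nontrivial_iff.1 hM; omega
    have := not_nontrivial_iff_subsingleton.1 hM
    have := hj.subsingleton
    exact ⟨y, .of_subsingleton⟩
  | succ n ih =>
    obtain ⟨f, hf⟩ := h.exists_top (by omega)
    rcases (f ∘ₗ j).surjective_or_eq_zero with hsurj | hzero
    · exact ⟨x, h.congr (LinearEquiv.ofBijective j ⟨hj, h.uniserial.surjective_of_comp hsurj⟩).symm⟩
    · exact ih (h.ker hf) (j := j.codRestrict _ (LinearMap.congr_fun hzero))
        (fun a b hab => hj (congrArg Subtype.val hab)) (by omega)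

theorem exists_of_exact (h : D.IsInterval k₀ M x y) {j : N →ₗ[A] M} {g : M →ₗ[A] Q}
    (hj : Function.Injective j) (hg : Function.Surjective g) (hjg : Function.Exact j g) :
    ∃ z, D.IsInterval k₀ N z y ∧ D.IsInterval k₀ Q x z := by
  obtain ⟨z, hz⟩ := h.exists_of_injective hj
  have hxy := h.le
  have hzy := hz.le
  have hxz : x ≤ z := by
    have hle := Module.length_le_of_injective j hj
    rw [h.length_eq, hz.length_eq, Nat.cast_le] at hle
    omega
  have hlen : Module.length A Q = (z - x).toNat := by
    have hadd := Module.length_eq_add_of_exact j g hj hg hjg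
    rw [h.length_eq, hz.length_eq, show (y - x).toNat = (y - z).toNat + (z - x).toNat by omega,
      Nat.cast_add] at hadd
    exact ((ENat.addLECancellable_of_ne_top (ENat.natCast_ne_top _)).inj.1 hadd).symm
  refine ⟨z, hz, h.uniserial.of_surjective hg, hxz, hlen, fun hlt => ?_⟩
  have : Nontrivial Q := by
    rw [← Module.length_pos_iff (R := A), hlen, Nat.cast_pos, Int.lt_toNat]
    omega
  have := h.isNoetherian
  have := isNoetherian_of_surjective g (LinearMap.range_eq_top.2 hg)
  obtain ⟨k, f, hf⟩ := D.exists_surjective (M := Q)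
  obtain ⟨e⟩ := h.top_unique (f := f ∘ₗ g) (hf.comp hg)
  exact ⟨e.toLinearMap ∘ₗ f, e.surjective.comp hf⟩

theorem exists_ker (h : D.IsInterval k₀ M x y) {g : M →ₗ[A] Q} (hg : Function.Surjective g) :
    ∃ z, D.IsInterval k₀ (LinearMap.ker g) z y ∧ D.IsInterval k₀ Q x z :=
  h.exists_of_exact (LinearMap.ker g).injective_subtype hg (LinearMap.exact_subtype_ker_map g)

theorem exists_quotient_range (h : D.IsInterval k₀ M x y) {j : N →ₗ[A] M}
    (hj : Function.Injective j) :
    ∃ z, D.IsInterval k₀ N z y ∧ D.IsInterval k₀ (M ⧸ LinearMap.range j) x z :=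
  h.exists_of_exact hj (Submodule.mkQ_surjective _) (LinearMap.exact_map_mkQ_range j)

theorem eq_add_one_of_isSimpleModule [IsSimpleModule A T] (h : D.IsInterval k₀ T x y) :
    y = x + 1 := by
  have hlen := h.length_eq
  rw [Module.length_eq_one, ← Nat.cast_one, Nat.cast_inj] at hlen
  omega

theorem soc_unique [IsSimpleModule A T] (h : D.IsInterval k₀ M x y) {f : T →ₗ[A] M}
    (hf : Function.Injective f) : Nonempty (T ≃ₗ[A] D.S (D.coord k₀ (y - 1))) := by
  obtain ⟨z, hz⟩ := h.exists_of_injective hf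
  obtain rfl := hz.eq_add_one_of_isSimpleModule
  rw [add_sub_cancel_right]
  exact hz.top_unique (f := LinearMap.id) Function.surjective_id

theorem exists_soc (h : D.IsInterval k₀ M x y) (hxy : x < y) :
    ∃ f : D.S (D.coord k₀ (y - 1)) →ₗ[A] M, Function.Injective f := by
  have := h.nontrivial_iff.2 hxy
  have := h.isArtinian
  obtain ⟨L, hL⟩ := IsAtomic.exists_atom (Submodule A M)
  have := isSimpleModule_iff_isAtom.2 hL
  obtain ⟨e⟩ := h.soc_unique L.injective_subtype
  exact ⟨L.subtype ∘ₗ e.symm.toLinearMap, L.injective_subtype.comp e.symm.injective⟩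

theorem of_soc (hM : Uniserial A M) (hlen : Module.length A M ≠ ⊤)
    {f : D.S (D.coord k₀ (y - 1)) →ₗ[A] M} (hf : Function.Injective f) :
    D.IsInterval k₀ M (y - (Module.length A M).toNat) y := by
  set n := (Module.length A M).toNat
  have := hf.nontrivial
  have := (isFiniteLength_iff_isNoetherian_isArtinian.1 (Module.length_ne_top_iff.1 hlen)).1
  obtain ⟨k, g, hg⟩ := D.exists_surjective (M := M)
  have hk : D.coord k (n - 1) = D.coord k₀ (y - 1) := by
    have h : D.IsInterval k M 0 (0 + n) := of_top (k₀ := k) (x := 0) hM hlen hg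
    rw [← zero_add (n : ℤ)]
    exact (D.eq_of_equiv _ _ (h.soc_unique hf)).symm
  have hk' : k = D.coord k₀ (y - n) := by
    rw [show y - n = (-(n - 1) : ℤ) + (y - 1) by ring, ← coord_coord, ← hk, coord_coord,
      neg_add_cancel]
    rfl
  subst hk'
  simpa only [n, sub_add_cancel] using of_top (x := y - n) hM hlen hg

end IsInterval

end SimpleSystem

namespace SimpleSystem

variable {A M N Q : Type} [Ring A] [AddCommGroup M] [Module A M] [AddCommGroup N] [Module A N]
  [AddCommGroup Q] [Module A Q] (D : SimpleSystem A) (k₀ : D.K) {x y z : ℤ}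

/-- The right end point of the interval starting at `x` of the indecomposable projective module
with top `S (coord x)`. -/
def projEnd (x : ℤ) : ℤ := x + (Module.length A (D.P (D.coord k₀ x))).toNat

/-- The left end point of the interval ending at `y` of the indecomposable injective module with
socle `S (coord (y - 1))`. -/
def injStart (y : ℤ) : ℤ := y - (Module.length A (D.I (D.coord k₀ (y - 1)))).toNat

theorem isInterval_P (x : ℤ) : D.IsInterval k₀ (D.P (D.coord k₀ x)) x (D.projEnd k₀ x) :=
  .of_top (D.uniserial_P _) (D.length_P _) (D.cover_surjective _)

theorem isInterval_I (y : ℤ) : D.IsInterval k₀ (D.I (D.coord k₀ (y - 1))) (D.injStart k₀ y) y :=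
  .of_soc (D.uniserial_I _) (D.length_I _) (D.hull_injective _)

theorem lt_projEnd (x : ℤ) : x < D.projEnd k₀ x :=
  (D.isInterval_P k₀ x).nontrivial_iff.1 (D.cover_surjective _).nontrivial

theorem injStart_lt (y : ℤ) : D.injStart k₀ y < y :=
  (D.isInterval_I k₀ y).nontrivial_iff.1 (D.hull_injective _).nontrivial

theorem exists_addConstMap_projEnd :
    ∃ n : ℤ, n ≠ 0 ∧ ∃ f : AddConstMap ℤ ℤ n n, ⇑f = D.projEnd k₀ := by
  obtain ⟨n, hn, hper⟩ := D.exists_coord_periodic k₀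
  refine ⟨n, hn, ⟨D.projEnd k₀, fun x => ?_⟩, rfl⟩
  have hlen := congrArg (fun k => (Module.length A (D.P k)).toNat) (hper x)
  simp only [projEnd] at hlen ⊢
  rw [hlen, add_right_comm]

namespace IsInterval

variable {D k₀}

theorem exists_surjective_P (h : D.IsInterval k₀ M x y) (hxy : x < y) :
    ∃ f : D.P (D.coord k₀ x) →ₗ[A] M, Function.Surjective f := by
  obtain ⟨f, hf⟩ := h.exists_top hxy
  exact (D.exists_lift h.uniserial hf).imp fun _ => And.left

theorem exists_injective_I (h : D.IsInterval k₀ M x y) (hxy : x < y) :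
    ∃ f : M →ₗ[A] D.I (D.coord k₀ (y - 1)), Function.Injective f := by
  obtain ⟨f, hf⟩ := h.exists_soc hxy
  exact (D.exists_extension h.uniserial hf).imp fun _ => And.left

theorem le_projEnd (h : D.IsInterval k₀ M x y) : y ≤ D.projEnd k₀ x := by
  rcases h.le.eq_or_lt with rfl | hxy
  · exact (D.lt_projEnd k₀ x).le
  obtain ⟨f, hf⟩ := h.exists_surjective_P hxy
  obtain ⟨z, hker, hM⟩ := (D.isInterval_P k₀ x).exists_ker hf
  exact h.right_eq hM ▸ hker.le

theorem injStart_le (h : D.IsInterval k₀ M x y) : D.injStart k₀ y ≤ x := by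
  rcases h.le.eq_or_lt with rfl | hxy
  · exact (D.injStart_lt k₀ x).le
  obtain ⟨f, hf⟩ := h.exists_injective_I hxy
  obtain ⟨z, hM, hcoker⟩ := (D.isInterval_I k₀ y).exists_quotient_range hf
  exact h.left_eq hM ▸ hcoker.le

theorem exists_submodule (h : D.IsInterval k₀ M x y) (hxz : x ≤ z) (hzy : z ≤ y) :
    ∃ L : Submodule A M, D.IsInterval k₀ L z y ∧ D.IsInterval k₀ (M ⧸ L) x z := by
  suffices ∃ L : Submodule A M, D.IsInterval k₀ L z y by
    obtain ⟨L, hL⟩ := this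
    obtain ⟨z', hL', hquot⟩ := h.exists_of_exact L.injective_subtype L.mkQ_surjective
      (LinearMap.exact_subtype_mkQ L)
    exact ⟨L, hL, hL.left_eq hL' ▸ hquot⟩
  induction z, hxz using Int.leInduction with
  | base => exact ⟨⊤, h.congr Submodule.topEquiv.symm⟩
  | succ z _ ih =>
    obtain ⟨L, hL⟩ := ih (by omega)
    obtain ⟨f, hf⟩ := hL.exists_top (by omega)
    exact ⟨(LinearMap.ker f).map L.subtype,
      (hL.ker hf).congr (Submodule.equivMapOfInjective _ L.injective_subtype _)⟩

end IsInterval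

theorem galoisConnection_injStart_projEnd :
    GaloisConnection (D.injStart k₀) (D.projEnd k₀) := by
  intro y x
  have hP := D.isInterval_P k₀ x
  have hI := D.isInterval_I k₀ y
  rcases lt_or_ge x y with hxy | hyx
  · constructor <;> intro hle
    · obtain ⟨L, hL, -⟩ := hI.exists_submodule hle hxy.le
      exact hL.le_projEnd
    · obtain ⟨L, -, hL⟩ := hP.exists_submodule hxy.le hle
      exact hL.injStart_le
  · exact iff_of_true ((D.injStart_lt k₀ y).le.trans hyx) (hyx.trans (D.lt_projEnd k₀ x).le)

namespace IsInterval

variable {D k₀}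

theorem bijective_of_surjective (hM : D.IsInterval k₀ M x y) (hQ : D.IsInterval k₀ Q x y)
    {f : M →ₗ[A] Q} (hf : Function.Surjective f) : Function.Bijective f := by
  obtain ⟨z, hker, hQ'⟩ := hM.exists_ker hf
  obtain rfl := hQ'.right_eq hQ
  have hsub := not_nontrivial_iff_subsingleton.1 (mt hker.nontrivial_iff.1 (lt_irrefl z))
  exact ⟨LinearMap.ker_eq_bot.1 (Submodule.eq_bot_of_subsingleton), hf⟩

theorem bijective_of_injective (hN : D.IsInterval k₀ N x y) (hM : D.IsInterval k₀ M x y)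
    {f : N →ₗ[A] M} (hf : Function.Injective f) : Function.Bijective f := by
  obtain ⟨z, hN', hcoker⟩ := hM.exists_quotient_range hf
  obtain rfl := hN'.left_eq hN
  have hsub := not_nontrivial_iff_subsingleton.1 (mt hcoker.nontrivial_iff.1 (lt_irrefl z))
  exact ⟨hf, LinearMap.range_eq_top.1 (Submodule.Quotient.subsingleton_iff.1 hsub)⟩

theorem projective_iff (h : D.IsInterval k₀ M x y) (hxy : x < y) :
    Module.Projective A M ↔ y = D.projEnd k₀ x := by
  have hP := D.isInterval_P k₀ x
  have := D.projective (D.coord k₀ x)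
  constructor
  · intro hproj
    obtain ⟨f, hf⟩ := h.exists_top hxy
    obtain ⟨g, hg, hfg⟩ := D.exists_lift h.uniserial hf
    obtain ⟨s, hs⟩ := Module.projective_lifting_property g LinearMap.id hg
    have hs_surj : Function.Surjective s := by
      refine (D.uniserial_P _).surjective_of_comp (f := D.cover _) ?_
      rwa [← hfg, LinearMap.comp_assoc, hs, LinearMap.comp_id]
    have hs_inj : Function.Injective s :=
      Function.LeftInverse.injective (g := g) (LinearMap.congr_fun hs)
    exact (h.congr (.ofBijective s ⟨hs_inj, hs_surj⟩)).right_eq hP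
  · rintro rfl
    obtain ⟨f, hf⟩ := h.exists_surjective_P hxy
    exact .of_equiv (.ofBijective f (hP.bijective_of_surjective h hf))

theorem injective_iff (h : D.IsInterval k₀ M x y) (hxy : x < y) :
    Module.Injective A M ↔ x = D.injStart k₀ y := by
  have hI := D.isInterval_I k₀ y
  have hinj := D.injective (D.coord k₀ (y - 1))
  constructor
  · intro hM
    obtain ⟨f, hf⟩ := h.exists_soc hxy
    obtain ⟨g, hg, hgf⟩ := D.exists_extension h.uniserial hf
    obtain ⟨r, hr⟩ := hM.out g hg LinearMap.id
    have hr_inj : Function.Injective r := by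
      refine (D.uniserial_I _).injective_of_comp (f := D.hull _) ?_
      rwa [← hgf, ← LinearMap.comp_assoc, show r ∘ₗ g = LinearMap.id from LinearMap.ext hr,
        LinearMap.id_comp]
    have hr_surj : Function.Surjective r := fun m => ⟨g m, hr m⟩
    exact h.left_eq (hI.congr (.ofBijective r ⟨hr_inj, hr_surj⟩))
  · rintro rfl
    obtain ⟨f, hf⟩ := h.exists_injective_I hxy
    let e := LinearEquiv.ofBijective f (h.bijective_of_injective hI hf)
    exact injective_of_retract hinj (i := e.toLinearMap) (r := e.symm.toLinearMap) (by simp)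

end IsInterval

end SimpleSystem

section HomologicalDimension

variable {A : Type} [Ring A] {M N P I X : ModuleCat.{0} A} {n : ℕ}

theorem hasProjectiveDimensionLT_kernel_iff (hP : Projective P) (f : P ⟶ M) [Epi f] :
    HasProjectiveDimensionLT M (n + 2) ↔ HasProjectiveDimensionLT (kernel f) (n + 1) :=
  have hS : (ShortComplex.mk (kernel.ι f) f (kernel.condition f)).ShortExact :=
    { exact := ShortComplex.exact_kernel f }
  hS.hasProjectiveDimensionLT_X₃_iff n hP

theorem hasInjectiveDimensionLT_cokernel_iff (hI : Injective I) (f : M ⟶ I) [Mono f] :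
    HasInjectiveDimensionLT M (n + 2) ↔ HasInjectiveDimensionLT (cokernel f) (n + 1) :=
  have hS : (ShortComplex.mk f (cokernel.π f) (cokernel.condition f)).ShortExact :=
    { exact := ShortComplex.exact_cokernel f }
  (hS.hasInjectiveDimensionLT_X₃_iff n hI).symm

theorem projDimLE_zero_iff : ArtinAlg.ProjDimLE A 0 M ↔ Projective M :=
  ⟨fun h => by cases h; assumption, .zero M⟩

theorem injDimLE_zero_iff : ArtinAlg.InjDimLE A 0 M ↔ Injective M :=
  ⟨fun h => by cases h; assumption, .zero M⟩

theorem projDimLE_iff : ArtinAlg.ProjDimLE A n M ↔ HasProjectiveDimensionLT M (n + 1) := by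
  induction n generalizing M with
  | zero => rw [projDimLE_zero_iff, projective_iff_hasProjectiveDimensionLT_one]
  | succ n ih =>
    constructor
    · rintro (_ | ⟨_, _, P, f, hP, hf, h⟩)
      exact (hasProjectiveDimensionLT_kernel_iff hP f).2 (ih.1 h)
    · intro h
      have hP : Projective (Projective.over M) := inferInstance
      exact .succ n M _ (Projective.π M) hP inferInstance
        (ih.2 ((hasProjectiveDimensionLT_kernel_iff hP _).1 h))

theorem injDimLE_iff : ArtinAlg.InjDimLE A n M ↔ HasInjectiveDimensionLT M (n + 1) := by
  induction n generalizing M with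
  | zero => rw [injDimLE_zero_iff, injective_iff_hasInjectiveDimensionLT_one]
  | succ n ih =>
    constructor
    · rintro (_ | ⟨_, _, I, f, hI, hf, h⟩)
      exact (hasInjectiveDimensionLT_cokernel_iff hI f).2 (ih.1 h)
    · intro h
      have hI : Injective (Injective.under M) := inferInstance
      exact .succ n M _ (Injective.ι M) hI inferInstance
        (ih.2 ((hasInjectiveDimensionLT_cokernel_iff hI _).1 h))

theorem projDimLE_succ_iff (h : ArtinAlg.IsSyzygyOf A M X) :
    ArtinAlg.ProjDimLE A (n + 1) M ↔ ArtinAlg.ProjDimLE A n X := by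
  obtain ⟨P, f, ⟨hP, hf, -⟩, ⟨e⟩⟩ := h
  rw [projDimLE_iff, projDimLE_iff, hasProjectiveDimensionLT_kernel_iff hP f]
  exact ⟨fun _ => hasProjectiveDimensionLT_of_iso e.symm _,
    fun _ => hasProjectiveDimensionLT_of_iso e _⟩

theorem injDimLE_succ_iff (h : ArtinAlg.IsCosyzygyOf A M X) :
    ArtinAlg.InjDimLE A (n + 1) M ↔ ArtinAlg.InjDimLE A n X := by
  obtain ⟨I, f, ⟨hI, hf, -⟩, ⟨e⟩⟩ := h
  rw [injDimLE_iff, injDimLE_iff, hasInjectiveDimensionLT_cokernel_iff hI f]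
  exact ⟨fun _ => hasInjectiveDimensionLT_of_iso e.symm _,
    fun _ => hasInjectiveDimensionLT_of_iso e _⟩

theorem projDim_le (h : ArtinAlg.ProjDimLE A n M) : ArtinAlg.projDim A M ≤ n :=
  sInf_le ⟨n, rfl, h⟩

theorem injDim_le (h : ArtinAlg.InjDimLE A n M) : ArtinAlg.injDim A M ≤ n :=
  sInf_le ⟨n, rfl, h⟩

theorem le_projDim (h : ∀ m < n, ¬ ArtinAlg.ProjDimLE A m M) : n ≤ ArtinAlg.projDim A M := by
  refine le_sInf ?_
  rintro _ ⟨m, rfl, hm⟩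
  exact Nat.cast_le.2 (not_lt.1 fun hlt => h m hlt hm)

theorem le_injDim (h : ∀ m < n, ¬ ArtinAlg.InjDimLE A m M) : n ≤ ArtinAlg.injDim A M := by
  refine le_sInf ?_
  rintro _ ⟨m, rfl, hm⟩
  exact Nat.cast_le.2 (not_lt.1 fun hlt => h m hlt hm)

end HomologicalDimension

section CoversAndEnvelopes

variable {A : Type} [Ring A] {M N P I : ModuleCat.{0} A}

theorem Uniserial.epi_of_epi_comp (hM : Uniserial A M) [Nontrivial P] {g : N ⟶ M} {f : M ⟶ P}
    (h : Epi (g ≫ f)) : Epi g :=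
  (ModuleCat.epi_iff_surjective g).2
    (hM.surjective_of_comp (f := f.hom) ((ModuleCat.epi_iff_surjective (g ≫ f)).1 h))

theorem Uniserial.mono_of_mono_comp (hM : Uniserial A M) [Nontrivial P] {f : P ⟶ M} {g : M ⟶ N}
    (h : Mono (f ≫ g)) : Mono g :=
  (ModuleCat.mono_iff_injective g).2
    (hM.injective_of_comp (f := f.hom) ((ModuleCat.mono_iff_injective (f ≫ g)).1 h))

theorem nonempty_iso_of_isProjectiveCoverHom {f : P ⟶ M} {g : N ⟶ M}
    (hf : ArtinAlg.IsProjectiveCoverHom A f) (hg : ArtinAlg.IsProjectiveCoverHom A g) :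
    Nonempty (P ≅ N) := by
  obtain ⟨hP, hf_epi, hf_ess⟩ := hf
  obtain ⟨hN, hg_epi, hg_ess⟩ := hg
  let a := Projective.factorThru f g
  have ha : a ≫ g = f := Projective.factorThru_comp f g
  have ha_epi : Epi a := hg_ess P a (ha ▸ hf_epi)
  let s := Projective.factorThru (𝟙 N) a
  have hs : s ≫ a = 𝟙 N := Projective.factorThru_comp _ a
  have hs_epi : Epi s := hf_ess N s (by rwa [← ha, reassoc_of% hs])
  have : IsSplitMono s := ⟨⟨⟨a, hs⟩⟩⟩
  have := isIso_of_epi_of_isSplitMono s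
  exact ⟨(asIso s).symm⟩

theorem nonempty_iso_of_isInjectiveEnvelopeHom {f : M ⟶ I} {g : M ⟶ N}
    (hf : ArtinAlg.IsInjectiveEnvelopeHom A f) (hg : ArtinAlg.IsInjectiveEnvelopeHom A g) :
    Nonempty (I ≅ N) := by
  obtain ⟨hI, hf_mono, hf_ess⟩ := hf
  obtain ⟨hN, hg_mono, hg_ess⟩ := hg
  let a := Injective.factorThru f g
  have ha : g ≫ a = f := Injective.comp_factorThru f g
  have ha_mono : Mono a := hg_ess I a (ha ▸ hf_mono)
  let r := Injective.factorThru (𝟙 N) a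
  have hr : a ≫ r = 𝟙 N := Injective.comp_factorThru _ a
  have hr_mono : Mono r := hf_ess N r (by rwa [← ha, Category.assoc, hr, Category.comp_id])
  have : IsSplitEpi r := ⟨⟨⟨a, hr⟩⟩⟩
  have := isIso_of_mono_of_isSplitEpi r
  exact ⟨asIso r⟩

end CoversAndEnvelopes

namespace SimpleSystem.IsInterval

variable {A : Type} [Ring A] {D : SimpleSystem A} {k₀ : D.K} {M N P I X T : ModuleCat.{0} A}
  {x y : ℤ}

theorem of_iso (h : D.IsInterval k₀ M x y) (e : M ≅ N) : D.IsInterval k₀ N x y :=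
  h.congr e.toLinearEquiv

theorem isSimpleTopOf_iff (h : D.IsInterval k₀ M x y) (hxy : x < y) :
    ArtinAlg.IsSimpleTopOf A M T ↔ Nonempty (T ≃ₗ[A] D.S (D.coord k₀ x)) := by
  constructor
  · rintro ⟨hT, f, hf, -⟩
    exact h.top_unique ((ModuleCat.epi_iff_surjective f).1 hf)
  · rintro ⟨e⟩
    have hT : IsSimpleModule A T := .congr e
    have := IsSimpleModule.nontrivial A T
    obtain ⟨f, hf⟩ := h.exists_top hxy
    exact ⟨hT, ModuleCat.ofHom (e.symm.toLinearMap ∘ₗ f),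
      (ModuleCat.epi_iff_surjective _).2 (e.symm.surjective.comp hf),
      fun _ _ => h.uniserial.epi_of_epi_comp⟩

theorem isSimpleSocOf_iff (h : D.IsInterval k₀ M x y) (hxy : x < y) :
    ArtinAlg.IsSimpleSocOf A M T ↔ Nonempty (T ≃ₗ[A] D.S (D.coord k₀ (y - 1))) := by
  constructor
  · rintro ⟨hT, f, hf, -⟩
    exact h.soc_unique ((ModuleCat.mono_iff_injective f).1 hf)
  · rintro ⟨e⟩
    have hT : IsSimpleModule A T := .congr e
    have := IsSimpleModule.nontrivial A T
    obtain ⟨f, hf⟩ := h.exists_soc hxy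
    exact ⟨hT, ModuleCat.ofHom (f ∘ₗ e.toLinearMap),
      (ModuleCat.mono_iff_injective _).2 (hf.comp e.injective),
      fun _ _ => h.uniserial.mono_of_mono_comp⟩

theorem exists_isProjectiveCoverHom (h : D.IsInterval k₀ M x y) (hxy : x < y) :
    ∃ f : D.P (D.coord k₀ x) ⟶ M, ArtinAlg.IsProjectiveCoverHom A f := by
  have := h.nontrivial_iff.2 hxy
  obtain ⟨f, hf⟩ := h.exists_surjective_P hxy
  exact ⟨ModuleCat.ofHom f, (IsProjective.iff_projective _).1 (D.projective _),
    (ModuleCat.epi_iff_surjective _).2 hf, fun _ _ => (D.uniserial_P _).epi_of_epi_comp⟩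

theorem exists_isInjectiveEnvelopeHom (h : D.IsInterval k₀ M x y) (hxy : x < y) :
    ∃ f : M ⟶ D.I (D.coord k₀ (y - 1)), ArtinAlg.IsInjectiveEnvelopeHom A f := by
  have := h.nontrivial_iff.2 hxy
  obtain ⟨f, hf⟩ := h.exists_injective_I hxy
  exact ⟨ModuleCat.ofHom f, (Module.injective_iff_injective_object A _).1 (D.injective _),
    (ModuleCat.mono_iff_injective _).2 hf, fun _ _ => (D.uniserial_I _).mono_of_mono_comp⟩

theorem projectiveCover (h : D.IsInterval k₀ M x y) (hxy : x < y)
    (hP : ArtinAlg.IsProjCoverOf A M P) : D.IsInterval k₀ P x (D.projEnd k₀ x) := by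
  obtain ⟨f, hf⟩ := hP
  obtain ⟨g, hg⟩ := h.exists_isProjectiveCoverHom hxy
  obtain ⟨e⟩ := nonempty_iso_of_isProjectiveCoverHom hg hf
  exact (D.isInterval_P k₀ x).of_iso e

theorem injectiveEnvelope (h : D.IsInterval k₀ M x y) (hxy : x < y)
    (hI : ArtinAlg.IsInjEnvOf A M I) : D.IsInterval k₀ I (D.injStart k₀ y) y := by
  obtain ⟨f, hf⟩ := hI
  obtain ⟨g, hg⟩ := h.exists_isInjectiveEnvelopeHom hxy
  obtain ⟨e⟩ := nonempty_iso_of_isInjectiveEnvelopeHom hg hf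
  exact (D.isInterval_I k₀ y).of_iso e

theorem syzygy (h : D.IsInterval k₀ M x y) (hxy : x < y) (hX : ArtinAlg.IsSyzygyOf A M X) :
    D.IsInterval k₀ X y (D.projEnd k₀ x) := by
  obtain ⟨P, f, hf, ⟨e⟩⟩ := hX
  obtain ⟨z, hker, hM⟩ := (h.projectiveCover hxy ⟨f, hf⟩).exists_ker
    ((ModuleCat.epi_iff_surjective f).1 hf.2.1)
  obtain rfl := hM.right_eq h
  exact hker.congr (e ≪≫ ModuleCat.kernelIsoKer f).toLinearEquiv.symm

theorem cosyzygy (h : D.IsInterval k₀ M x y) (hxy : x < y) (hX : ArtinAlg.IsCosyzygyOf A M X) :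
    D.IsInterval k₀ X (D.injStart k₀ y) x := by
  obtain ⟨I, f, hf, ⟨e⟩⟩ := hX
  obtain ⟨z, hM, hcoker⟩ := (h.injectiveEnvelope hxy ⟨f, hf⟩).exists_quotient_range
    ((ModuleCat.mono_iff_injective f).1 hf.2.1)
  obtain rfl := hM.left_eq h
  exact hcoker.congr (e ≪≫ ModuleCat.cokernelIsoRangeQuotient f).toLinearEquiv.symm

end SimpleSystem.IsInterval

namespace SimpleSystem.IsInterval

variable {A : Type} [Ring A] {D : SimpleSystem A} {k₀ : D.K} {M X : ModuleCat.{0} A}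
  {x y : ℤ} {n : ℕ}

theorem exists_isSyzygyOf (h : D.IsInterval k₀ M x y) (hxy : x < y) :
    ∃ X, ArtinAlg.IsSyzygyOf A M X :=
  let ⟨f, hf⟩ := h.exists_isProjectiveCoverHom hxy
  ⟨kernel f, _, f, hf, ⟨Iso.refl _⟩⟩

theorem exists_isCosyzygyOf (h : D.IsInterval k₀ M x y) (hxy : x < y) :
    ∃ X, ArtinAlg.IsCosyzygyOf A M X :=
  let ⟨f, hf⟩ := h.exists_isInjectiveEnvelopeHom hxy
  ⟨cokernel f, _, f, hf, ⟨Iso.refl _⟩⟩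

theorem exists_isNthSyzygy (h : D.IsInterval k₀ M x y)
    (hlt : ∀ m < n, syzygyEnd (D.projEnd k₀) x y m < syzygyEnd (D.projEnd k₀) x y (m + 1)) :
    ∃ X, ArtinAlg.IsNthSyzygy A n M X := by
  induction n generalizing M x y with
  | zero => exact ⟨M, ⟨Iso.refl M⟩⟩
  | succ n ih =>
    have hxy : x < y := hlt 0 n.succ_pos
    obtain ⟨Y, hY⟩ := h.exists_isSyzygyOf hxy
    obtain ⟨X, hX⟩ := ih (h.syzygy hxy hY) fun m hm => by
      simpa only [← syzygyEnd_succ] using hlt (m + 1) (Nat.succ_lt_succ hm)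
    exact ⟨X, Y, hY, hX⟩

theorem exists_isNthCosyzygy (h : D.IsInterval k₀ M x y)
    (hlt : ∀ m < n, syzygyEnd (D.injStart k₀) y x (m + 1) < syzygyEnd (D.injStart k₀) y x m) :
    ∃ X, ArtinAlg.IsNthCosyzygy A n M X := by
  induction n generalizing M x y with
  | zero => exact ⟨M, ⟨Iso.refl M⟩⟩
  | succ n ih =>
    have hxy : x < y := hlt 0 n.succ_pos
    obtain ⟨Y, hY⟩ := h.exists_isCosyzygyOf hxy
    obtain ⟨X, hX⟩ := ih (h.cosyzygy hxy hY) fun m hm => by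
      simpa only [← syzygyEnd_succ] using hlt (m + 1) (Nat.succ_lt_succ hm)
    exact ⟨X, Y, hY, hX⟩

theorem nthSyzygy (h : D.IsInterval k₀ M x y)
    (hlt : ∀ m < n, syzygyEnd (D.projEnd k₀) x y m < syzygyEnd (D.projEnd k₀) x y (m + 1))
    (hX : ArtinAlg.IsNthSyzygy A n M X) :
    D.IsInterval k₀ X (syzygyEnd (D.projEnd k₀) x y n) (syzygyEnd (D.projEnd k₀) x y (n + 1)) := by
  induction n generalizing M x y with
  | zero =>
    obtain ⟨e⟩ := hX
    exact h.of_iso e.symm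
  | succ n ih =>
    obtain ⟨Y, hY, hX⟩ := hX
    simp only [syzygyEnd_succ _ x y]
    exact ih (h.syzygy (hlt 0 n.succ_pos) hY) (fun m hm => by
      simpa only [← syzygyEnd_succ] using hlt (m + 1) (Nat.succ_lt_succ hm)) hX

theorem nthCosyzygy (h : D.IsInterval k₀ M x y)
    (hlt : ∀ m < n, syzygyEnd (D.injStart k₀) y x (m + 1) < syzygyEnd (D.injStart k₀) y x m)
    (hX : ArtinAlg.IsNthCosyzygy A n M X) :
    D.IsInterval k₀ X (syzygyEnd (D.injStart k₀) y x (n + 1))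
      (syzygyEnd (D.injStart k₀) y x n) := by
  induction n generalizing M x y with
  | zero =>
    obtain ⟨e⟩ := hX
    exact h.of_iso e.symm
  | succ n ih =>
    obtain ⟨Y, hY, hX⟩ := hX
    simp only [syzygyEnd_succ _ y x]
    exact ih (h.cosyzygy (hlt 0 n.succ_pos) hY) (fun m hm => by
      simpa only [← syzygyEnd_succ] using hlt (m + 1) (Nat.succ_lt_succ hm)) hX

theorem projDimLE_iff (h : D.IsInterval k₀ M x y)
    (hlt : ∀ m ≤ n, syzygyEnd (D.projEnd k₀) x y m < syzygyEnd (D.projEnd k₀) x y (m + 1)) :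
    ArtinAlg.ProjDimLE A n M ↔
      syzygyEnd (D.projEnd k₀) x y (n + 1) = syzygyEnd (D.projEnd k₀) x y (n + 2) := by
  have hxy : x < y := hlt 0 n.zero_le
  induction n generalizing M x y with
  | zero =>
    rw [projDimLE_zero_iff, ← IsProjective.iff_projective]
    exact h.projective_iff hxy
  | succ n ih =>
    obtain ⟨Y, hY⟩ := h.exists_isSyzygyOf hxy
    rw [projDimLE_succ_iff hY, syzygyEnd_succ _ x y, syzygyEnd_succ _ x y]
    exact ih (h.syzygy hxy hY) (fun m hm => by
      simpa only [← syzygyEnd_succ] using hlt (m + 1) (Nat.succ_le_succ hm))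
      (hlt 1 (Nat.succ_le_succ n.zero_le))

theorem injDimLE_iff (h : D.IsInterval k₀ M x y)
    (hlt : ∀ m ≤ n, syzygyEnd (D.injStart k₀) y x (m + 1) < syzygyEnd (D.injStart k₀) y x m) :
    ArtinAlg.InjDimLE A n M ↔
      syzygyEnd (D.injStart k₀) y x (n + 1) = syzygyEnd (D.injStart k₀) y x (n + 2) := by
  have hxy : x < y := hlt 0 n.zero_le
  induction n generalizing M x y with
  | zero =>
    rw [injDimLE_zero_iff, ← Module.injective_iff_injective_object]
    exact h.injective_iff hxy
  | succ n ih =>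
    obtain ⟨Y, hY⟩ := h.exists_isCosyzygyOf hxy
    rw [injDimLE_succ_iff hY, syzygyEnd_succ _ y x, syzygyEnd_succ _ y x]
    exact ih (h.cosyzygy hxy hY) (fun m hm => by
      simpa only [← syzygyEnd_succ] using hlt (m + 1) (Nat.succ_le_succ hm))
      (hlt 1 (Nat.succ_le_succ n.zero_le))

theorem le_projDim (h : D.IsInterval k₀ M x y)
    (hlt : ∀ m ≤ n, syzygyEnd (D.projEnd k₀) x y m < syzygyEnd (D.projEnd k₀) x y (m + 1)) :
    n ≤ ArtinAlg.projDim A M :=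
  Nakayama.le_projDim fun m hm hle =>
    (hlt (m + 1) hm).ne ((h.projDimLE_iff fun j hj => hlt j (hj.trans hm.le)).1 hle)

theorem le_injDim (h : D.IsInterval k₀ M x y)
    (hlt : ∀ m ≤ n, syzygyEnd (D.injStart k₀) y x (m + 1) < syzygyEnd (D.injStart k₀) y x m) :
    n ≤ ArtinAlg.injDim A M :=
  Nakayama.le_injDim fun m hm hle =>
    (hlt (m + 1) hm).ne' ((h.injDimLE_iff fun j hj => hlt j (hj.trans hm.le)).1 hle)

end SimpleSystem.IsInterval

namespace HomologicalPair

variable {A : Type} [Ring A] {D : SimpleSystem A} {k₀ : D.K} {S T I P N : ModuleCat.{0} A}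
  {e : ℕ} {y t : ℤ} {d : ℕ∞}

theorem min_projDim_eq (h : HomologicalPair (D.projEnd k₀) (D.injStart k₀) e y t)
    (hS : D.IsInterval k₀ S (y - 1) y) (hI : D.IsInterval k₀ I (D.injStart k₀ y) y) :
    min (ArtinAlg.projDim A S) (ArtinAlg.projDim A I) = e := by
  have gc := D.galoisConnection_injStart_projEnd k₀
  have hltS m (hm : m ≤ e) := h.syzygyEnd_lt_succ gc
    (Int.le_sub_one_of_lt (D.injStart_lt k₀ y)) (sub_one_lt y) hm
  have hltI m (hm : m ≤ e) := h.syzygyEnd_lt_succ gc le_rfl (D.injStart_lt k₀ y) hm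
  refine le_antisymm ?_ (le_min (hS.le_projDim hltS) (hI.le_projDim hltI))
  rcases e.even_or_odd with he | he
  · exact min_le_of_right_le <| projDim_le <|
      (hI.projDimLE_iff hltI).2 (h.syzygyEnd_stable_of_even gc he)
  · exact min_le_of_left_le <| projDim_le <|
      (hS.projDimLE_iff hltS).2 (h.syzygyEnd_stable_of_odd gc (Order.sub_one_covBy y) he)

theorem min_injDim_eq (h : HomologicalPair (D.projEnd k₀) (D.injStart k₀) e y t)
    (hT : D.IsInterval k₀ T t (t + 1)) (hP : D.IsInterval k₀ P t (D.projEnd k₀ t)) :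
    min (ArtinAlg.injDim A T) (ArtinAlg.injDim A P) = e := by
  have gc := D.galoisConnection_injStart_projEnd k₀
  have hltT m (hm : m ≤ e) := (h.dual gc).syzygyEnd_lt_succ gc.dual
    (Int.add_one_le_of_lt (D.lt_projEnd k₀ t)) (lt_add_one t) hm
  have hltP m (hm : m ≤ e) := (h.dual gc).syzygyEnd_lt_succ gc.dual le_rfl (D.lt_projEnd k₀ t) hm
  refine le_antisymm ?_ (le_min (hT.le_injDim hltT) (hP.le_injDim hltP))
  rcases e.even_or_odd with he | he
  · exact min_le_of_right_le <| injDim_le <|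
      (hP.injDimLE_iff hltP).2 (syzygyEnd_stable_of_even (α := ℤᵒᵈ) gc.dual (h.dual gc) he)
  · exact min_le_of_left_le <| injDim_le <| (hT.injDimLE_iff hltT).2 <|
      syzygyEnd_stable_of_odd (α := ℤᵒᵈ) gc.dual (h.dual gc) (Order.covBy_add_one t).toDual he

theorem eRelVal_iff (h : HomologicalPair (D.projEnd k₀) (D.injStart k₀) e y t)
    (hS : D.IsInterval k₀ S (y - 1) y) : ArtinAlg.ERelVal A S d ↔ d = e := by
  constructor
  · rintro ⟨I, hI, rfl⟩
    exact h.min_projDim_eq hS (hS.injectiveEnvelope (sub_one_lt y) hI)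
  · rintro rfl
    obtain ⟨f, hf⟩ := hS.exists_isInjectiveEnvelopeHom (sub_one_lt y)
    exact ⟨_, ⟨f, hf⟩,
      (h.min_projDim_eq hS (hS.injectiveEnvelope (sub_one_lt y) ⟨f, hf⟩)).symm⟩

theorem eStarVal_iff (h : HomologicalPair (D.projEnd k₀) (D.injStart k₀) e y t)
    (hT : D.IsInterval k₀ T t (t + 1)) : ArtinAlg.EStarVal A T d ↔ d = e := by
  constructor
  · rintro ⟨P, hP, rfl⟩
    exact h.min_injDim_eq hT (hT.projectiveCover (lt_add_one t) hP)
  · rintro rfl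
    obtain ⟨f, hf⟩ := hT.exists_isProjectiveCoverHom (lt_add_one t)
    exact ⟨_, ⟨f, hf⟩, (h.min_injDim_eq hT (hT.projectiveCover (lt_add_one t) ⟨f, hf⟩)).symm⟩

theorem exists_isInterval (h : HomologicalPair (D.projEnd k₀) (D.injStart k₀) e y t)
    (hS : D.IsInterval k₀ S (y - 1) y)
    (hN : (Odd e ∧ N = S) ∨ (Even e ∧ ArtinAlg.IsInjEnvOf A S N)) :
    ∃ x, D.IsInterval k₀ N x y ∧ syzygyEnd (D.projEnd k₀) x y e = t ∧
      ∀ m ≤ e, syzygyEnd (D.projEnd k₀) x y m < syzygyEnd (D.projEnd k₀) x y (m + 1) := by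
  have gc := D.galoisConnection_injStart_projEnd k₀
  have hy := D.injStart_lt k₀ y
  rcases hN with ⟨he, rfl⟩ | ⟨he, hN⟩
  · exact ⟨y - 1, hS, h.syzygyEnd_eq_of_odd he _, fun m hm =>
      h.syzygyEnd_lt_succ gc (Int.le_sub_one_of_lt hy) (sub_one_lt y) hm⟩
  · exact ⟨_, hS.injectiveEnvelope (sub_one_lt y) hN, h.syzygyEnd_eq_of_even he, fun m hm =>
      h.syzygyEnd_lt_succ gc le_rfl hy hm⟩

theorem exists_isInterval_dual (h : HomologicalPair (D.projEnd k₀) (D.injStart k₀) e y t)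
    (hT : D.IsInterval k₀ T t (t + 1))
    (hN : (Odd e ∧ N = T) ∨ (Even e ∧ ArtinAlg.IsProjCoverOf A T N)) :
    ∃ z, D.IsInterval k₀ N t z ∧ syzygyEnd (D.injStart k₀) z t e = y ∧
      ∀ m ≤ e, syzygyEnd (D.injStart k₀) z t (m + 1) < syzygyEnd (D.injStart k₀) z t m := by
  have gc := D.galoisConnection_injStart_projEnd k₀
  have ht := D.lt_projEnd k₀ t
  rcases hN with ⟨he, rfl⟩ | ⟨he, hN⟩
  · exact ⟨t + 1, hT, (h.dual gc).syzygyEnd_eq_of_odd he _, fun m hm =>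
      (h.dual gc).syzygyEnd_lt_succ gc.dual (Int.add_one_le_of_lt ht) (lt_add_one t) hm⟩
  · exact ⟨_, hT.projectiveCover (lt_add_one t) hN, (h.dual gc).syzygyEnd_eq_of_even he,
      fun m hm => (h.dual gc).syzygyEnd_lt_succ gc.dual le_rfl ht hm⟩

theorem hRel_iff [IsSimpleModule A S]
    (h : HomologicalPair (D.projEnd k₀) (D.injStart k₀) e y t)
    (hS : D.IsInterval k₀ S (y - 1) y) :
    ArtinAlg.HRel A S T ↔ Nonempty (T ≃ₗ[A] D.S (D.coord k₀ t)) := by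
  constructor
  · rintro ⟨-, -, z, hz, N, hN, X, hX, hXT⟩
    obtain rfl : z = e := by exact_mod_cast (h.eRelVal_iff hS).1 hz
    obtain ⟨x, hNx, rfl, hlt⟩ := h.exists_isInterval hS hN
    exact ((hNx.nthSyzygy (fun m hm => hlt m hm.le) hX).isSimpleTopOf_iff (hlt z le_rfl)).1 hXT
  · intro hT
    obtain ⟨N, hN⟩ : ∃ N, (Odd e ∧ N = S) ∨ (Even e ∧ ArtinAlg.IsInjEnvOf A S N) := by
      rcases e.even_or_odd with he | he
      · exact ⟨_, .inr ⟨he, hS.exists_isInjectiveEnvelopeHom (sub_one_lt y)⟩⟩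
      · exact ⟨S, .inl ⟨he, rfl⟩⟩
    have he := (h.eRelVal_iff hS).2 rfl
    obtain ⟨x, hNx, rfl, hlt⟩ := h.exists_isInterval hS hN
    obtain ⟨X, hX⟩ := hNx.exists_isNthSyzygy fun m hm => hlt m (le_of_lt hm)
    have hXT := ((hNx.nthSyzygy (fun m hm => hlt m hm.le) hX).isSimpleTopOf_iff
      (hlt e le_rfl)).2 hT
    exact ⟨inferInstance, hXT.1, e, he, N, hN, X, hX, hXT⟩

theorem hStarRel_iff [IsSimpleModule A T]
    (h : HomologicalPair (D.projEnd k₀) (D.injStart k₀) e y t)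
    (hT : D.IsInterval k₀ T t (t + 1)) :
    ArtinAlg.HStarRel A T S ↔ Nonempty (S ≃ₗ[A] D.S (D.coord k₀ (y - 1))) := by
  constructor
  · rintro ⟨-, -, z, hz, N, hN, X, hX, hXS⟩
    obtain rfl : z = e := by exact_mod_cast (h.eStarVal_iff hT).1 hz
    obtain ⟨x, hNx, rfl, hlt⟩ := h.exists_isInterval_dual hT hN
    exact ((hNx.nthCosyzygy (fun m hm => hlt m hm.le) hX).isSimpleSocOf_iff (hlt z le_rfl)).1 hXS
  · intro hS
    obtain ⟨N, hN⟩ : ∃ N, (Odd e ∧ N = T) ∨ (Even e ∧ ArtinAlg.IsProjCoverOf A T N) := by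
      rcases e.even_or_odd with he | he
      · exact ⟨_, .inr ⟨he, hT.exists_isProjectiveCoverHom (lt_add_one t)⟩⟩
      · exact ⟨T, .inl ⟨he, rfl⟩⟩
    have he := (h.eStarVal_iff hT).2 rfl
    obtain ⟨x, hNx, rfl, hlt⟩ := h.exists_isInterval_dual hT hN
    obtain ⟨X, hX⟩ := hNx.exists_isNthCosyzygy fun m hm => hlt m (le_of_lt hm)
    have hXS := ((hNx.nthCosyzygy (fun m hm => hlt m hm.le) hX).isSimpleSocOf_iff
      (hlt e le_rfl)).2 hS
    exact ⟨inferInstance, hXS.1, e, he, N, hN, X, hX, hXS⟩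

end HomologicalPair

namespace SimpleSystem

variable {A : Type} [Ring A] (D : SimpleSystem A)

theorem exists_homologicalPair (k₀ : D.K) (y : ℤ) :
    ∃ e t, HomologicalPair (D.projEnd k₀) (D.injStart k₀) e y t := by
  obtain ⟨n, hn, f, hf⟩ := D.exists_addConstMap_projEnd k₀
  obtain ⟨k, hk⟩ := exists_range_iterate_eq hn f
  rw [hf] at hk
  exact HomologicalPair.exists_of_mem_range (D.galoisConnection_injStart_projEnd k₀)
    (Order.sub_one_covBy y) (hk ⟨y, rfl⟩)

variable {D} in
theorem IsInterval.of_equiv_simple {k₀ : D.K} {M : ModuleCat.{0} A} {x : ℤ}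
    (e : M ≃ₗ[A] D.S (D.coord k₀ x)) : D.IsInterval k₀ M x (x + 1) := by
  have hlen : Module.length A M = 1 := by rw [e.length_eq, Module.length_eq_one]
  have huni : Uniserial A (D.S (D.coord k₀ x)) :=
    (D.uniserial_P _).of_surjective (D.cover_surjective _)
  simpa [hlen] using of_top (huni.of_surjective (f := e.symm.toLinearMap) e.symm.surjective)
    (by simp [hlen]) (f := e.toLinearMap) e.surjective

theorem exists_hRel_iff (k : D.K) :
    ∃ (l : D.K) (e : ℕ),
      (∀ S : ModuleCat.{0} A, Nonempty (S ≃ₗ[A] D.S k) →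
        (∀ d, ArtinAlg.ERelVal A S d ↔ d = e) ∧
        ∀ T, ArtinAlg.HRel A S T ↔ Nonempty (T ≃ₗ[A] D.S l)) ∧
      ∀ T : ModuleCat.{0} A, Nonempty (T ≃ₗ[A] D.S l) →
        (∀ d, ArtinAlg.EStarVal A T d ↔ d = e) ∧
        ∀ S, ArtinAlg.HStarRel A T S ↔ Nonempty (S ≃ₗ[A] D.S k) := by
  obtain ⟨e, t, h⟩ := D.exists_homologicalPair k 1
  refine ⟨D.coord k t, e, ?_, ?_⟩
  · rintro S ⟨eS⟩
    have : IsSimpleModule A S := .congr eS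
    have hS : D.IsInterval k S (1 - 1) 1 := .of_equiv_simple eS
    exact ⟨fun d => h.eRelVal_iff hS, fun T => h.hRel_iff hS⟩
  · rintro T ⟨eT⟩
    have : IsSimpleModule A T := .congr eT
    have hT : D.IsInterval k T t (t + 1) := .of_equiv_simple eT
    exact ⟨fun d => h.eStarVal_iff hT, fun S => h.hStarRel_iff hT⟩

theorem exists_perm_hRel_iff :
    ∃ h : Equiv.Perm D.K,
      (∀ S T : ModuleCat.{0} A, ArtinAlg.HRel A S T ↔
        ∃ k, Nonempty (S ≃ₗ[A] D.S k) ∧ Nonempty (T ≃ₗ[A] D.S (h k))) ∧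
      (∀ S T : ModuleCat.{0} A, ArtinAlg.HStarRel A T S ↔
        ∃ k, Nonempty (S ≃ₗ[A] D.S k) ∧ Nonempty (T ≃ₗ[A] D.S (h k))) ∧
      ∀ (k : D.K) (S T : ModuleCat.{0} A), Nonempty (S ≃ₗ[A] D.S k) →
        Nonempty (T ≃ₗ[A] D.S (h k)) → ∀ d, ArtinAlg.ERelVal A S d ↔ ArtinAlg.EStarVal A T d := by
  choose h e source target using D.exists_hRel_iff
  have h_inj : Function.Injective h := fun k l hkl => by
    have hk := ((target k (D.S (h k)) ⟨.refl A _⟩).2 (D.S k)).2 ⟨.refl A _⟩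
    exact D.eq_of_equiv k l (((target l _ ⟨hkl ▸ .refl A _⟩).2 (D.S k)).1 hk)
  have := D.finite
  have h_bij := Finite.injective_iff_bijective.1 h_inj
  refine ⟨.ofBijective h h_bij, fun S T => ⟨fun hST => ?_, ?_⟩, fun S T => ⟨fun hTS => ?_, ?_⟩,
    fun k S T hS hT d => ((source k S hS).1 d).trans ((target k T hT).1 d).symm⟩
  · have := hST.1
    obtain ⟨k, hS⟩ := D.exists_equiv S
    exact ⟨k, hS, ((source k S hS).2 T).1 hST⟩
  · rintro ⟨k, hS, hT⟩
    exact ((source k S hS).2 T).2 hT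
  · have := hTS.1
    obtain ⟨l, hT⟩ := D.exists_equiv T
    obtain ⟨k, rfl⟩ := h_bij.surjective l
    exact ⟨k, ((target k T hT).2 S).1 hTS, hT⟩
  · rintro ⟨k, hS, hT⟩
    exact ((target k T hT).2 S).2 hS

theorem nonempty_iso {X Y : ModuleCat.{0} A} {k : D.K} (hX : Nonempty (X ≃ₗ[A] D.S k))
    (hY : Nonempty (Y ≃ₗ[A] D.S k)) : Nonempty (X ≅ Y) :=
  let ⟨eX⟩ := hX
  let ⟨eY⟩ := hY
  ⟨(eX.trans eY.symm).toModuleIso⟩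

end SimpleSystem

end Nakayama

open ArtinAlg Nakayama in
theorem statement_17_general (A : Type) [Ring A] [IsArtinianRing A] (hNak : IsNakayama A) :
    (∀ S : ModuleCat.{0} A, IsSimpleModule A ↥S → ∃ T, HRel A S T) ∧
    (∀ T : ModuleCat.{0} A, IsSimpleModule A ↥T → ∃ S, HRel A S T) ∧
    (∀ S T : ModuleCat.{0} A, HRel A S T ↔ HStarRel A T S) ∧
    (∀ S T T' : ModuleCat.{0} A, HRel A S T → HRel A S T' → Nonempty (T ≅ T')) ∧
    (∀ S S' T : ModuleCat.{0} A, HRel A S T → HRel A S' T → Nonempty (S ≅ S')) ∧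
    (∀ S T : ModuleCat.{0} A, HRel A S T →
      ∀ x : ℕ∞, ERelVal A S x ↔ EStarVal A T x) := by
  obtain ⟨D⟩ := nonempty_simpleSystem hNak
  obtain ⟨h, hRel_iff, hStarRel_iff, hval⟩ := D.exists_perm_hRel_iff
  refine ⟨fun S hS => ?_, fun T hT => ?_, fun S T => (hRel_iff S T).trans (hStarRel_iff S T).symm,
    fun S T T' hT hT' => ?_, fun S S' T hS hS' => ?_, fun S T hST => ?_⟩
  · obtain ⟨k, hk⟩ := D.exists_equiv S
    exact ⟨D.S (h k), (hRel_iff _ _).2 ⟨k, hk, ⟨.refl A _⟩⟩⟩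
  · obtain ⟨l, hl⟩ := D.exists_equiv T
    exact ⟨D.S (h.symm l), (hRel_iff _ _).2 ⟨h.symm l, ⟨.refl A _⟩, by rwa [h.apply_symm_apply]⟩⟩
  · obtain ⟨k, ⟨eS⟩, hT⟩ := (hRel_iff _ _).1 hT
    obtain ⟨l, ⟨eS'⟩, hT'⟩ := (hRel_iff _ _).1 hT'
    obtain rfl := D.eq_of_equiv k l ⟨eS.symm.trans eS'⟩
    exact D.nonempty_iso hT hT'
  · obtain ⟨k, hS, ⟨eT⟩⟩ := (hRel_iff _ _).1 hS
    obtain ⟨l, hS', ⟨eT'⟩⟩ := (hRel_iff _ _).1 hS'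
    obtain rfl := h.injective (D.eq_of_equiv (h k) (h l) ⟨eT.symm.trans eT'⟩)
    exact D.nonempty_iso hS hS'
  · obtain ⟨k, hS, hT⟩ := (hRel_iff _ _).1 hST
    exact hval k S T hS hT

open ArtinAlg in
/-- Let `A` be a Nakayama algebra and let
`h(S) = top (Ω^{e(S)} N S)` and `h*(S) = soc (Σ^{e*(S)} N* S)`. Then `h` is a
permutation of the simple modules with inverse `h*`, and `e*(h(S)) = e(S)` for every
simple module `S`. -/
theorem statement_17 (R : Type) [CommRing R] [IsArtinianRing R]
    (A : Type) [Ring A] [Algebra R A] [Module.Finite R A]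
    (hNak : IsNakayama A) :
    (∀ S : ModuleCat.{0} A, IsSimpleModule A ↥S → ∃ T, HRel A S T) ∧
    (∀ T : ModuleCat.{0} A, IsSimpleModule A ↥T → ∃ S, HRel A S T) ∧
    (∀ S T : ModuleCat.{0} A, HRel A S T ↔ HStarRel A T S) ∧
    (∀ S T T' : ModuleCat.{0} A, HRel A S T → HRel A S T' → Nonempty (T ≅ T')) ∧
    (∀ S S' T : ModuleCat.{0} A, HRel A S T → HRel A S' T → Nonempty (S ≅ S')) ∧
    (∀ S T : ModuleCat.{0} A, HRel A S T →
      ∀ x : ℕ∞, ERelVal A S x ↔ EStarVal A T x) :=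
  have := IsArtinianRing.of_finite R A
  statement_17_general A hNak
end
end
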